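/- arXiv:math/0412400 — 2 statements merged into one kernel-verified Lean document; each statement's English description precedes it below -/
import Mathlib

section
/- Let g_1,…,g_m ∈ ℝ[x_1,…,x_n] and let V = {x ∈ ℝ^n : g_j(x) = 0 for j = 1,…,m}. Let f ∈ ℝ[x_1,…,x_n] be nonnegative on V. Then for every ε > 0 there exist r(ε) ∈ ℕ and nonnegative real scalars λ_1,…,λ_m such that, for every r ≥ r(ε), the polynomial f + ε·θ_r + ∑_{j=1}^m λ_j·g_j^2 is a sum of squares of real polynomials. -/
open MvPolynomial MeasureTheory Filter Topology

/-- `θ_r(x) = ∑_{k=0}^r ∑_{i=1}^n x_i^{2k}/k!` as a polynomial in `ℝ[x_1,…,x_n]`. -/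
noncomputable def theta (n r : ℕ) : MvPolynomial (Fin n) ℝ :=
  ∑ k ∈ Finset.range (r + 1), ∑ i : Fin n,
    C ((1 : ℝ) / (Nat.factorial k : ℝ)) * X i ^ (2 * k)

/-- A polynomial is a sum of squares if it is a finite sum of squares of polynomials. -/
def IsSOS {n : ℕ} (p : MvPolynomial (Fin n) ℝ) : Prop :=
  ∃ (k : ℕ) (q : Fin k → MvPolynomial (Fin n) ℝ), p = ∑ i, q i ^ 2


lemma isSOS_of_isSumSq {n : ℕ} {p : MvPolynomial (Fin n) ℝ} (h : IsSumSq p) : IsSOS p := by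
  induction h with
  | zero => exact ⟨0, fun _ => 0, by simp⟩
  | sq_add a hs ih =>
    obtain ⟨k, q, hq⟩ := ih
    refine ⟨k + 1, Fin.cons a q, ?_⟩
    rw [Fin.sum_univ_succ]
    simp [hq, sq]

lemma sumSq_C {n : ℕ} {c : ℝ} (hc : 0 ≤ c) : IsSumSq (C c : MvPolynomial (Fin n) ℝ) := by
  have : (C c : MvPolynomial (Fin n) ℝ) = C (√c) * C (√c) := by
    rw [← C_mul, Real.mul_self_sqrt hc]
  rw [this]; exact IsSumSq.mul_self _

lemma sumSq_congr {n : ℕ} {a b : MvPolynomial (Fin n) ℝ} (h : IsSumSq a) (e : b = a) :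
    IsSumSq b := e ▸ h

/-- the preorder given by sums of squares -/
def SLe {n : ℕ} (a b : MvPolynomial (Fin n) ℝ) : Prop := IsSumSq (b - a)

lemma SLe.trans {n : ℕ} {a b c : MvPolynomial (Fin n) ℝ} (h : SLe a b) (h' : SLe b c) :
    SLe a c := by
  have := IsSumSq.add h' h
  rwa [sub_add_sub_cancel] at this

lemma SLe.refl {n : ℕ} (a : MvPolynomial (Fin n) ℝ) : SLe a a := by
  simp [SLe]

lemma SLe.add {n : ℕ} {a b c d : MvPolynomial (Fin n) ℝ} (h : SLe a b) (h' : SLe c d) :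
    SLe (a + c) (b + d) := by
  have := IsSumSq.add h h'
  have e : b + d - (a + c) = b - a + (d - c) := by ring
  rw [SLe, e]; exact this

lemma SLe.mul_left {n : ℕ} {a b c : MvPolynomial (Fin n) ℝ} (hc : IsSumSq c) (h : SLe a b) :
    SLe (c * a) (c * b) := by
  rw [SLe, ← mul_sub]; exact hc.mul h

lemma SLe.prod {n : ℕ} {ι : Type*} (s : Finset ι) (a b : ι → MvPolynomial (Fin n) ℝ)
    (ha : ∀ i, IsSumSq (a i)) (hb : ∀ i, IsSumSq (b i)) (h : ∀ i, SLe (a i) (b i)) :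
    SLe (∏ i ∈ s, a i) (∏ i ∈ s, b i) := by
  classical
  induction s using Finset.induction_on with
  | empty => simpa using SLe.refl 1
  | insert i s hi ih =>
    rw [Finset.prod_insert hi, Finset.prod_insert hi]
    have h1 : SLe (a i * ∏ x ∈ s, a x) (a i * ∏ x ∈ s, b x) := SLe.mul_left (ha i) ih
    have h2 : SLe ((∏ x ∈ s, b x) * a i) ((∏ x ∈ s, b x) * b i) :=
      SLe.mul_left (IsSumSq.prod (fun x _ => hb x)) (h i)
    rw [mul_comm _ (a i), mul_comm _ (b i)] at h2
    exact h1.trans h2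

lemma sumSq_X {n : ℕ} (i : Fin n) (k : ℕ) :
    IsSumSq (X i ^ (2 * k) : MvPolynomial (Fin n) ℝ) := by
  rw [two_mul, pow_add]; exact IsSumSq.mul_self _

lemma sumSq_pow {n : ℕ} {a : MvPolynomial (Fin n) ℝ} (h : IsSumSq a) (k : ℕ) :
    IsSumSq (a ^ k) := by
  induction k with
  | zero => simp
  | succ k ih => rw [pow_succ]; exact ih.mul h

lemma sumSq_theta_sub (n : ℕ) {r s : ℕ} (h : r ≤ s) : IsSumSq (theta n s - theta n r) := by
  unfold theta
  rw [← Finset.sum_range_add_sum_Ico _ (Nat.succ_le_succ h), add_sub_cancel_left]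
  refine IsSumSq.sum fun k _ => IsSumSq.sum fun i _ => ?_
  exact (sumSq_C (by positivity)).mul (sumSq_X i k)

lemma sumSq_theta (n r : ℕ) : IsSumSq (theta n r) := by
  unfold theta
  refine IsSumSq.sum fun k _ => IsSumSq.sum fun i _ => ?_
  exact (sumSq_C (by positivity)).mul (sumSq_X i k)

/-- Chebyshev sum inequality in s.o.s. form -/
lemma sos_cheb (n s : ℕ) :
    SLe ((∑ i : Fin n, X i ^ 2) * (∑ i : Fin n, X i ^ (2 * s)))
      (C (n : ℝ) * ∑ i : Fin n, (X i : MvPolynomial (Fin n) ℝ) ^ (2 * (s + 1))) := by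
  have key : ∀ i j : Fin n, IsSumSq (((X i : MvPolynomial (Fin n) ℝ) ^ 2 - X j ^ 2) *
      (X i ^ (2 * s) - X j ^ (2 * s))) := by
    intro i j
    have := (Commute.all ((X i : MvPolynomial (Fin n) ℝ) ^ 2) (X j ^ 2)).mul_geom_sum₂ s
    rw [pow_mul, pow_mul, ← this, ← mul_assoc]
    refine (IsSumSq.mul_self _).mul (IsSumSq.sum fun k _ => ?_)
    rw [← pow_mul, ← pow_mul]
    exact (sumSq_X i _).mul (sumSq_X j _)
  have h2 : IsSumSq (∑ i : Fin n, ∑ j : Fin n, C (1/2 : ℝ) * (((X i : MvPolynomial (Fin n) ℝ) ^ 2 - X j ^ 2) *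
      (X i ^ (2 * s) - X j ^ (2 * s)))) :=
    IsSumSq.sum fun i _ => IsSumSq.sum fun j _ => (sumSq_C (by norm_num)).mul (key i j)
  unfold SLe
  convert h2 using 1
  have e : ∀ i j : Fin n, C (1/2 : ℝ) * (((X i : MvPolynomial (Fin n) ℝ) ^ 2 - X j ^ 2) *
      (X i ^ (2 * s) - X j ^ (2 * s))) = C (1/2 : ℝ) * X i ^ (2 * (s + 1)) + C (1/2 : ℝ) * X j ^ (2 * (s + 1))
        - C (1/2 : ℝ) * (X i ^ 2 * X j ^ (2 * s)) - C (1/2 : ℝ) * (X j ^ 2 * X i ^ (2 * s)) := by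
    intro i j; ring
  simp_rw [e]
  simp only [Finset.sum_add_distrib, Finset.sum_sub_distrib, ← Finset.mul_sum, Finset.sum_const,
    Finset.card_univ, Fintype.card_fin, ← Finset.sum_mul]
  have hh : (C (1/2 : ℝ) : MvPolynomial (Fin n) ℝ) + C (1/2 : ℝ) = 1 := by
    rw [← C_add]; norm_num
  have hn : (C (n : ℝ) : MvPolynomial (Fin n) ℝ) = (n : MvPolynomial (Fin n) ℝ) := by simp
  rw [hn]
  generalize (C (1/2 : ℝ) : MvPolynomial (Fin n) ℝ) = c at *
  have hc : 2 * c = 1 := by rw [two_mul, hh]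
  simp only [nsmul_eq_mul, ← Finset.mul_sum]
  linear_combination (-(n : MvPolynomial (Fin n) ℝ) * (∑ i : Fin n, X i ^ (2 * (s + 1))) +
    (∑ i : Fin n, X i ^ 2) * (∑ i : Fin n, X i ^ (2 * s))) * hc

lemma sos_powmean (n s : ℕ) :
    SLe ((∑ i : Fin n, (X i : MvPolynomial (Fin n) ℝ) ^ 2) ^ (s + 1))
      (C ((n : ℝ) ^ s) * ∑ i : Fin n, X i ^ (2 * (s + 1))) := by
  induction s with
  | zero => simpa using SLe.refl _
  | succ s ih =>
    have hT : IsSumSq (∑ i : Fin n, (X i : MvPolynomial (Fin n) ℝ) ^ 2) :=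
      IsSumSq.sum fun i _ => by simpa using sumSq_X i 1
    have h1 := SLe.mul_left hT ih
    have h2 := SLe.mul_left (sumSq_C (n := n) (c := (n : ℝ) ^ s) (by positivity)) (sos_cheb n (s + 1))
    rw [pow_succ' _ (s + 1)]
    refine h1.trans ?_
    convert h2 using 1
    · ring
    · rw [pow_succ, C_mul]; ring

lemma sos_even_dom {n : ℕ} (hn : 0 < n) (β : Fin n → ℕ) (r : ℕ) (hr : ∑ i, β i ≤ r) :
    SLe (∏ i, (X i : MvPolynomial (Fin n) ℝ) ^ (2 * β i))
      (C ((n : ℝ) ^ (∑ i, β i) * (Nat.factorial (∑ i, β i) : ℝ)) * theta n r) := by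
  set s := ∑ i, β i with hs
  have hn1 : (1 : ℝ) ≤ n := by exact_mod_cast hn
  have h1 : SLe (∏ i, (X i : MvPolynomial (Fin n) ℝ) ^ (2 * β i))
      ((∑ i : Fin n, (X i : MvPolynomial (Fin n) ℝ) ^ 2) ^ s) := by
    rw [hs, ← Finset.prod_pow_eq_pow_sum]
    have hT : IsSumSq (∑ i : Fin n, (X i : MvPolynomial (Fin n) ℝ) ^ 2) :=
      IsSumSq.sum fun i _ => by simpa using sumSq_X i 1
    refine SLe.prod _ _ _ (fun i => sumSq_X i _) (fun i => sumSq_pow hT _) fun i => ?_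
    have h3 := SLe.prod (Finset.range (β i)) (fun _ => (X i : MvPolynomial (Fin n) ℝ) ^ 2)
      (fun _ => ∑ i : Fin n, (X i : MvPolynomial (Fin n) ℝ) ^ 2)
      (fun _ => by simpa using sumSq_X i 1) (fun _ => hT) (fun _ => by
        unfold SLe
        rw [← Finset.add_sum_erase _ _ (Finset.mem_univ i), add_sub_cancel_left]
        exact IsSumSq.sum fun i _ => by simpa using sumSq_X i 1)
    simpa [← pow_mul] using h3
  refine h1.trans ?_
  have h2 : SLe ((∑ i : Fin n, (X i : MvPolynomial (Fin n) ℝ) ^ 2) ^ s)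
      (C ((n : ℝ) ^ s) * ∑ i : Fin n, X i ^ (2 * s)) := by
    rcases Nat.eq_zero_or_pos s with h0 | h0
    · rw [h0]
      have : IsSumSq (C ((n : ℝ) - 1) : MvPolynomial (Fin n) ℝ) := sumSq_C (by linarith)
      simpa [SLe] using this
    · obtain ⟨t, ht⟩ : ∃ t, s = t + 1 := ⟨s - 1, by omega⟩
      rw [ht]
      refine (sos_powmean n t).trans ?_
      unfold SLe
      rw [← sub_mul, ← C_sub]
      refine (sumSq_C ?_).mul (IsSumSq.sum fun i _ => sumSq_X i _)
      rw [pow_succ]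
      nlinarith [pow_pos (lt_of_lt_of_le one_pos hn1) t]
  refine h2.trans ?_
  rw [C_mul, mul_assoc]
  refine SLe.mul_left (sumSq_C (by positivity)) ?_
  unfold SLe theta
  rw [← Finset.add_sum_erase _ _ (Finset.mem_range.2 (Nat.lt_succ_of_le hr)), mul_add, Finset.mul_sum]
  have e : ∀ i : Fin n, C (Nat.factorial s : ℝ) * (C ((1 : ℝ) / (Nat.factorial s : ℝ)) * X i ^ (2 * s))
      = (X i ^ (2 * s) : MvPolynomial (Fin n) ℝ) := by
    intro i
    rw [← mul_assoc, ← C_mul, mul_one_div_cancel (by positivity)]; simp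
  simp_rw [e]
  rw [add_sub_cancel_left]
  refine (sumSq_C (by positivity)).mul (IsSumSq.sum fun k _ => IsSumSq.sum fun i _ => ?_)
  exact (sumSq_C (by positivity)).mul (sumSq_X i k)

lemma factorial_sum_le {ι : Type*} (s : Finset ι) (a : ι → ℕ) :
    Nat.factorial (∑ i ∈ s, a i) ≤ 2 ^ (s.card * ∑ i ∈ s, a i) * ∏ i ∈ s, Nat.factorial (a i) := by
  classical
  induction s using Finset.induction_on with
  | empty => simp
  | insert i s hi ih =>
    rw [Finset.sum_insert hi, Finset.prod_insert hi, Finset.card_insert_of_notMem hi]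
    set S := ∑ x ∈ s, a x
    have h1 : Nat.factorial (a i + S) ≤ 2 ^ (a i + S) * (Nat.factorial (a i) * Nat.factorial S) := by
      rw [← Nat.add_choose_mul_factorial_mul_factorial, mul_assoc]
      exact Nat.mul_le_mul_right _ (Nat.choose_le_two_pow _ _)
    calc _ ≤ _ := h1
      _ ≤ 2 ^ (a i + S) * (Nat.factorial (a i) * (2 ^ (s.card * S) * ∏ x ∈ s, Nat.factorial (a x))) := by
        gcongr
      _ = 2 ^ (a i + S + s.card * S) * (Nat.factorial (a i) * ∏ x ∈ s, Nat.factorial (a x)) := by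
        rw [pow_add]; ring
      _ ≤ _ := by
        gcongr
        · norm_num
        · nlinarith [Nat.zero_le (s.card * a i)]

/-- weights -/
noncomputable def wt (B : ℝ) (l : ℕ) : ℝ := B ^ ((l + 1) / 2) * (Nat.factorial ((l + 1) / 2) : ℝ)

lemma sos_monomial_dom {n : ℕ} (hn : 0 < n) (α : Fin n → ℕ) (r : ℕ)
    (hr : ∑ i, (α i + 1) / 2 ≤ r) (c : ℝ) :
    IsSumSq (C c * ∏ i, (X i : MvPolynomial (Fin n) ℝ) ^ α i +
      C (|c| * ∏ i, wt (n * 2 ^ n) (α i)) * theta n r) := by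
  have hn1 : (1 : ℝ) ≤ n := by exact_mod_cast hn
  set W := ∏ i, wt (n * 2 ^ n) (α i) with hW
  have hw : ∀ β : Fin n → ℕ, (∀ i, β i ≤ (α i + 1) / 2) →
      SLe (∏ i, (X i : MvPolynomial (Fin n) ℝ) ^ (2 * β i)) (C W * theta n r) := by
    intro β hβ
    have hle : ∑ i, β i ≤ ∑ i, (α i + 1) / 2 := Finset.sum_le_sum fun i _ => hβ i
    refine (sos_even_dom hn β r (hle.trans hr)).trans ?_
    unfold SLe
    rw [← sub_mul, ← C_sub]
    refine (sumSq_C ?_).mul (sumSq_theta n r)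
    rw [sub_nonneg]
    calc (n : ℝ) ^ (∑ i, β i) * (Nat.factorial (∑ i, β i) : ℝ)
        ≤ (n : ℝ) ^ (∑ i, (α i + 1) / 2) * (Nat.factorial (∑ i, (α i + 1) / 2) : ℝ) := by
          gcongr
      _ ≤ (n : ℝ) ^ (∑ i, (α i + 1) / 2) * (2 ^ (n * ∑ i, (α i + 1) / 2) * ∏ i, (Nat.factorial ((α i + 1) / 2) : ℝ)) := by
          gcongr
          have := factorial_sum_le Finset.univ (fun i => (α i + 1) / 2)
          rw [Finset.card_univ, Fintype.card_fin] at this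
          exact_mod_cast this
      _ = W := by
          rw [hW]; unfold wt
          rw [Finset.prod_mul_distrib, Finset.prod_pow_eq_pow_sum, mul_pow, ← pow_mul, mul_assoc]
  have h1 := hw (fun i => α i / 2) (fun i => by omega)
  have h2 := hw (fun i => (α i + 1) / 2) (fun i => le_rfl)
  have hab : ∏ i, (X i : MvPolynomial (Fin n) ℝ) ^ α i =
      (∏ i, (X i : MvPolynomial (Fin n) ℝ) ^ (α i / 2)) * ∏ i, (X i : MvPolynomial (Fin n) ℝ) ^ ((α i + 1) / 2) := by
    rw [← Finset.prod_mul_distrib]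
    refine Finset.prod_congr rfl fun i _ => ?_
    rw [← pow_add]; congr 1; omega
  have ha : ∏ i, (X i : MvPolynomial (Fin n) ℝ) ^ (2 * (α i / 2)) = (∏ i, (X i : MvPolynomial (Fin n) ℝ) ^ (α i / 2)) ^ 2 := by
    rw [← Finset.prod_pow]; refine Finset.prod_congr rfl fun i _ => ?_
    rw [← pow_mul, mul_comm]
  have hb : ∏ i, (X i : MvPolynomial (Fin n) ℝ) ^ (2 * ((α i + 1) / 2)) = (∏ i, (X i : MvPolynomial (Fin n) ℝ) ^ ((α i + 1) / 2)) ^ 2 := by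
    rw [← Finset.prod_pow]; refine Finset.prod_congr rfl fun i _ => ?_
    rw [← pow_mul, mul_comm]
  rw [ha] at h1; rw [hb] at h2; rw [hab]
  generalize (∏ i, (X i : MvPolynomial (Fin n) ℝ) ^ (α i / 2)) = a at *
  generalize (∏ i, (X i : MvPolynomial (Fin n) ℝ) ^ ((α i + 1) / 2)) = b at *
  unfold SLe at h1 h2
  have h3 : IsSumSq (C (|c| / 2) * ((C W * theta n r - a ^ 2) + (C W * theta n r - b ^ 2))) :=
    (sumSq_C (by positivity)).mul (h1.add h2)
  have hc2 : C |c| = C (|c| / 2) + (C (|c| / 2) : MvPolynomial (Fin n) ℝ) := by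
    rw [← C_add]; congr 1; ring
  rcases le_total 0 c with hc | hc
  · have h4 : IsSumSq (C (|c| / 2) * ((a + b) * (a + b))) :=
      (sumSq_C (by positivity)).mul (IsSumSq.mul_self _)
    refine sumSq_congr (h3.add h4) ?_
    rw [C_mul, hc2]
    have : (C c : MvPolynomial (Fin n) ℝ) = C (|c| / 2) + (C (|c| / 2)) := by
      rw [← hc2, abs_of_nonneg hc]
    rw [this]; ring
  · have h4 : IsSumSq (C (|c| / 2) * ((a - b) * (a - b))) :=
      (sumSq_C (by positivity)).mul (IsSumSq.mul_self _)
    refine sumSq_congr (h3.add h4) ?_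
    rw [C_mul, hc2]
    have : (C c : MvPolynomial (Fin n) ℝ) = - (C (|c| / 2) + (C (|c| / 2))) := by
      rw [← hc2, abs_of_nonpos hc, ← C_neg, neg_neg]
    rw [this]; ring

/-- The entire function `sin z / z`. -/
noncomputable def csinc : ℂ → ℂ := dslope Complex.sin 0

lemma csinc_differentiable : Differentiable ℂ csinc := by
  rw [← differentiableOn_univ]
  exact (Complex.differentiableOn_dslope Filter.univ_mem).2 Complex.differentiable_sin.differentiableOn

lemma csinc_zero : csinc 0 = 1 := by
  simp [csinc, dslope_same]

lemma norm_csin_le (z : ℂ) : ‖Complex.sin z‖ ≤ Real.exp |z.im| := by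
  unfold Complex.sin
  rw [norm_div, norm_mul, Complex.norm_I, mul_one, Complex.norm_ofNat, div_le_iff₀ (by norm_num)]
  refine (norm_sub_le _ _).trans ?_
  rw [Complex.norm_exp, Complex.norm_exp, mul_two]
  gcongr
  · simp [le_abs_self]
  · simp [neg_le_abs]

lemma csinc_bound : ∃ K : ℝ, 1 ≤ K ∧ ∀ z : ℂ, ‖csinc z‖ * (1 + ‖z‖) ≤ K * Real.exp |z.im| := by
  obtain ⟨C0, hC0⟩ := (isCompact_closedBall (0 : ℂ) 1).exists_bound_of_continuousOn
    csinc_differentiable.continuous.continuousOn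
  refine ⟨max 2 (2 * C0), le_trans (by norm_num) (le_max_left _ _), fun z => ?_⟩
  have he : 1 ≤ Real.exp |z.im| := Real.one_le_exp (abs_nonneg _)
  rcases le_total ‖z‖ 1 with h | h
  · have h1 := hC0 z (by simpa using h)
    have h0 : 0 ≤ C0 := (norm_nonneg _).trans h1
    calc ‖csinc z‖ * (1 + ‖z‖) ≤ C0 * (1 + 1) := by gcongr
      _ ≤ max 2 (2 * C0) * 1 := by rw [mul_one]; refine le_trans (by linarith) (le_max_right _ _)
      _ ≤ _ := by gcongr
  · have hz : z ≠ 0 := by rintro rfl; simp at h; linarith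
    have hs : csinc z = z⁻¹ * Complex.sin z := by
      unfold csinc
      rw [dslope_of_ne _ hz, slope_def_field]; simp; field_simp
    rw [hs, norm_mul, norm_inv]
    have hz0 : 0 < ‖z‖ := by linarith
    calc ‖z‖⁻¹ * ‖Complex.sin z‖ * (1 + ‖z‖) = ‖Complex.sin z‖ * ((1 + ‖z‖) / ‖z‖) := by field_simp
      _ ≤ Real.exp |z.im| * 2 := by
        gcongr
        · exact norm_csin_le z
        · rw [div_le_iff₀ hz0]; linarith
      _ ≤ _ := by rw [mul_comm]; gcongr; exact le_max_left _ _

lemma exists_h (m : ℕ) : ∃ (c : ℕ → ℝ → ℝ) (h : ℝ → ℝ) (K : ℝ), 0 ≤ K ∧ Continuous h ∧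
    (∀ j, Continuous (c j)) ∧ (∀ y x, HasSum (fun j => c j y * x ^ j) (h (x - y))) ∧
    (∀ ρ : ℝ, 1 ≤ ρ → ∀ j y, |c j y| ≤ K * Real.exp (K * ρ) / ρ ^ j / (1 + |y|) ^ m) ∧ h 0 = 1 := by
  obtain ⟨K, hK, hb⟩ := csinc_bound
  set H : ℂ → ℂ := fun z => csinc z ^ m with hH
  have hHd : Differentiable ℂ H := csinc_differentiable.pow m
  refine ⟨fun j y => (((Nat.factorial j : ℂ))⁻¹ * iteratedDeriv j H (-(y : ℂ))).re,
    fun x => (H x).re, max (K ^ m) (2 * m), ?_, ?_, ?_, ?_, ?_, ?_⟩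
  · positivity
  · exact Complex.continuous_re.comp (hHd.continuous.comp Complex.continuous_ofReal)
  · intro j
    refine Complex.continuous_re.comp (continuous_const.mul ?_)
    exact (ContDiff.continuous_iteratedDeriv j (hHd.contDiff (n := j)) le_rfl).comp
      (Complex.continuous_ofReal.neg)
  · intro y x
    have h1 := Complex.hasSum_taylorSeries_of_entire hHd (-(y : ℂ)) ((x - y : ℝ) : ℂ)
    have h2 := Complex.hasSum_re h1
    convert h2 using 1
    funext j
    have : ((x - y : ℝ) : ℂ) - -(y : ℂ) = (x : ℂ) := by push_cast; ring
    rw [this, smul_eq_mul, smul_eq_mul, ← Complex.ofReal_pow, mul_left_comm, Complex.re_ofReal_mul, mul_comm]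
  · intro ρ hρ j y
    have hρ0 : 0 < ρ := by linarith
    refine (Complex.abs_re_le_norm _).trans ?_
    have hy : 0 < 1 + |y| := by positivity
    have h1 : ∀ z ∈ Metric.sphere (-(y : ℂ)) ρ, ‖H z‖ ≤ (K * Real.exp (2 * ρ) / (1 + |y|)) ^ m := by
      intro z hz
      rw [hH]; simp only [norm_pow]
      refine pow_le_pow_left₀ (norm_nonneg _) ?_ m
      rw [le_div_iff₀ hy]
      have hz' : ‖z - -(y : ℂ)‖ = ρ := by rwa [← dist_eq_norm]
      have him : |z.im| ≤ ρ := by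
        have := Complex.abs_im_le_norm (z - -(y : ℂ))
        rw [hz'] at this; simpa using this
      have hyz : |y| ≤ ‖z‖ + ρ := by
        have := norm_sub_le (z - -(y : ℂ)) z
        rw [hz', sub_neg_eq_add, add_sub_cancel_left, Complex.norm_real] at this
        rw [Real.norm_eq_abs] at this; linarith
      have hr : 1 + ρ ≤ Real.exp ρ := by have := Real.add_one_le_exp ρ; linarith
      have h1y : 1 + |y| ≤ (1 + ‖z‖) * (1 + ρ) := by nlinarith [norm_nonneg z]
      calc ‖csinc z‖ * (1 + |y|) ≤ ‖csinc z‖ * ((1 + ‖z‖) * (1 + ρ)) := by gcongr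
        _ = (‖csinc z‖ * (1 + ‖z‖)) * (1 + ρ) := by ring
        _ ≤ (K * Real.exp ρ) * Real.exp ρ := by
          have hK0 : 0 ≤ K := by linarith
          refine mul_le_mul ((hb z).trans ?_) hr (by positivity) (by positivity)
          gcongr
        _ = K * Real.exp (2 * ρ) := by rw [two_mul, Real.exp_add]; ring
    have h2 := Complex.norm_iteratedDeriv_le_of_forall_mem_sphere_norm_le j hρ0 hHd.diffContOnCl h1
    rw [norm_mul, norm_inv, Complex.norm_natCast]
    have hj : (0 : ℝ) < (Nat.factorial j : ℝ) := by positivity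
    calc (Nat.factorial j : ℝ)⁻¹ * ‖iteratedDeriv j H (-(y : ℂ))‖
        ≤ (Nat.factorial j : ℝ)⁻¹ * ((Nat.factorial j : ℝ) * (K * Real.exp (2 * ρ) / (1 + |y|)) ^ m / ρ ^ j) := by
          gcongr
      _ = K ^ m * Real.exp (2 * m * ρ) / ρ ^ j / (1 + |y|) ^ m := by
          rw [div_pow, mul_pow, ← Real.exp_nat_mul]
          have : (m : ℝ) * (2 * ρ) = 2 * m * ρ := by ring
          rw [this]
          field_simp
      _ ≤ _ := by
          gcongr
          · exact le_max_left _ _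
          · exact le_max_right _ _
  · simp [hH, csinc_zero]

lemma coeff_unique {a b : ℕ → ℝ} {f : ℝ → ℝ}
    (ha : ∀ x : ℝ, |x| < 1 → HasSum (fun l => a l * x ^ l) (f x))
    (hb : ∀ x : ℝ, |x| < 1 → HasSum (fun l => b l * x ^ l) (f x)) : a = b := by
  have key : ∀ a : ℕ → ℝ, (∀ x : ℝ, |x| < 1 → HasSum (fun l => a l * x ^ l) (f x)) →
      HasFPowerSeriesAt f (FormalMultilinearSeries.ofScalars ℝ a) 0 := by
    intro a ha
    rw [hasFPowerSeriesAt_iff]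
    have : ∀ᶠ x : ℝ in 𝓝 0, |x| < 1 := by
      have := Metric.ball_mem_nhds (0 : ℝ) one_pos
      filter_upwards [this] with x hx
      simpa using hx
    filter_upwards [this] with x hx
    simpa [FormalMultilinearSeries.coeff_ofScalars, mul_comm] using ha x hx
  have := (key a ha).eq_formalMultilinearSeries (key b hb)
  funext l
  have h2 := congrArg (fun p => FormalMultilinearSeries.coeff p l) this
  simpa [FormalMultilinearSeries.coeff_ofScalars] using h2

lemma hasSum_congr' {f f' : ℕ → ℝ} {a a' : ℝ} (h : HasSum f a) (e : f' = f) (e' : a' = a) :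
    HasSum f' a' := by
  rw [e, e']; exact h

lemma integrable_G : Integrable (fun y : ℝ => 1 / (1 + |y|) ^ 2) := by
  have := integrable_one_add_norm (E := ℝ) (μ := volume) (r := 2) (by simp)
  refine this.congr (Filter.Eventually.of_forall fun y => ?_)
  have hy : 0 < 1 + |y| := by positivity
  simp only [Real.norm_eq_abs]
  rw [Real.rpow_neg hy.le, one_div]
  norm_num

lemma exists_base (d : ℕ) : ∃ (c : ℕ → ℝ → ℝ) (D K : ℝ) (ν : ℕ → ℝ), 0 ≤ D ∧ 0 ≤ K ∧ ν 0 = 1 ∧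
    (∀ k ≤ d, ∀ i j, Integrable (fun y : ℝ => y ^ k * c i y * c j y)) ∧
    (∀ k ≤ d, ∀ i j, ∀ ρ : ℝ, 1 ≤ ρ →
      |∫ y : ℝ, y ^ k * c i y * c j y| ≤ D * Real.exp (K * ρ) / ρ ^ (i + j)) ∧
    (∀ k ≤ d, ∀ l, ∑ p ∈ Finset.HasAntidiagonal.antidiagonal l, ∫ y : ℝ, y ^ k * c p.1 y * c p.2 y =
      if l ≤ k then (Nat.choose k l : ℝ) * ν (k - l) else 0) := by
  obtain ⟨c, h, K, hK, hcont, hccont, hsum, hbd, h0⟩ := exists_h (d + 1)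
  -- pointwise bound
  have hpt : ∀ k ≤ d, ∀ i j, ∀ ρ : ℝ, 1 ≤ ρ → ∀ y : ℝ,
      ‖y ^ k * c i y * c j y‖ ≤ K ^ 2 * Real.exp (2 * K * ρ) / ρ ^ (i + j) * (1 / (1 + |y|) ^ 2) := by
    intro k hk i j ρ hρ y
    have hy : 1 ≤ 1 + |y| := by have := abs_nonneg y; linarith
    have hy0 : 0 < 1 + |y| := by linarith
    have hρ0 : 0 < ρ := by linarith
    rw [norm_mul, norm_mul, norm_pow, Real.norm_eq_abs, Real.norm_eq_abs, Real.norm_eq_abs]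
    have e1 : |y| ^ k ≤ (1 + |y|) ^ d :=
      (pow_le_pow_left₀ (abs_nonneg y) (by linarith) k).trans (pow_le_pow_right₀ hy hk)
    calc |y| ^ k * |c i y| * |c j y|
        ≤ (1 + |y|) ^ d * (K * Real.exp (K * ρ) / ρ ^ i / (1 + |y|) ^ (d + 1)) *
          (K * Real.exp (K * ρ) / ρ ^ j / (1 + |y|) ^ (d + 1)) := by
          gcongr
          · exact hbd ρ hρ i y
          · exact hbd ρ hρ j y
      _ = K ^ 2 * Real.exp (2 * K * ρ) / ρ ^ (i + j) * (1 / (1 + |y|) ^ 2) * (1 / (1 + |y|) ^ d) := by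
          have : Real.exp (2 * K * ρ) = Real.exp (K * ρ) * Real.exp (K * ρ) := by
            rw [← Real.exp_add]; congr 1; ring
          rw [this, pow_add ρ]
          field_simp
          ring
      _ ≤ K ^ 2 * Real.exp (2 * K * ρ) / ρ ^ (i + j) * (1 / (1 + |y|) ^ 2) * 1 := by
          gcongr
          rw [div_le_one (by positivity)]
          exact one_le_pow₀ hy
      _ = _ := by rw [mul_one]
  have hint : ∀ k ≤ d, ∀ i j, Integrable (fun y : ℝ => y ^ k * c i y * c j y) := by
    intro k hk i j
    refine Integrable.mono' (integrable_G.const_mul _) ?_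
      (Filter.Eventually.of_forall (hpt k hk i j 1 le_rfl))
    exact (((continuous_pow k).mul (hccont i)).mul (hccont j)).aestronglyMeasurable
  set I0 := ∫ y : ℝ, 1 / (1 + |y|) ^ 2 with hI0
  have hI0n : 0 ≤ I0 := integral_nonneg fun y => by positivity
  have hnormint : ∀ k ≤ d, ∀ i j, ∀ ρ : ℝ, 1 ≤ ρ →
      ∫ y : ℝ, ‖y ^ k * c i y * c j y‖ ≤ (K ^ 2 * I0) * Real.exp (2 * K * ρ) / ρ ^ (i + j) := by
    intro k hk i j ρ hρ
    refine (integral_mono (hint k hk i j).norm (integrable_G.const_mul _) (hpt k hk i j ρ hρ)).trans ?_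
    rw [integral_const_mul, ← hI0]
    apply le_of_eq; ring
  -- h as c 0
  have hh : ∀ y, h (-y) = c 0 y := by
    intro y
    have h1 := hsum y 0
    have h2 : HasSum (fun j => c j y * (0 : ℝ) ^ j) (c 0 y) := by
      have := hasSum_single (f := fun j => c j y * (0 : ℝ) ^ j) 0 (fun j hj => by simp [hj])
      simpa using this
    have := h1.unique h2
    simpa using this
  have hhint : ∀ k ≤ d, Integrable (fun y : ℝ => y ^ k * h (-y) ^ 2) := by
    intro k hk
    refine (hint k hk 0 0).congr (Filter.Eventually.of_forall fun y => ?_)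
    simp only [hh]; ring
  have hJ : 0 < ∫ y : ℝ, h (-y) ^ 2 := by
    refine integral_pos_of_integrable_nonneg_nonzero (x := 0) ?_ ?_ ?_ ?_
    · exact (hcont.comp continuous_neg).pow 2
    · simpa using hhint 0 (Nat.zero_le _)
    · intro y; positivity
    · simp [h0]
  set J := ∫ y : ℝ, h (-y) ^ 2 with hJdef
  set μ : ℕ → ℝ := fun q => ∫ y : ℝ, y ^ q * h (-y) ^ 2 with hμ
  -- main identity
  have hid : ∀ k ≤ d, ∀ l, ∑ p ∈ Finset.HasAntidiagonal.antidiagonal l, ∫ y : ℝ, y ^ k * c p.1 y * c p.2 y =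
      if l ≤ k then (Nat.choose k l : ℝ) * μ (k - l) else 0 := by
    intro k hk
    have := coeff_unique (f := fun x => ∫ y : ℝ, y ^ k * h (x - y) ^ 2)
      (a := fun l => ∑ p ∈ Finset.HasAntidiagonal.antidiagonal l, ∫ y : ℝ, y ^ k * c p.1 y * c p.2 y)
      (b := fun l => if l ≤ k then (Nat.choose k l : ℝ) * μ (k - l) else 0) ?_ ?_
    · intro l; exact congrFun this l
    · intro x hx
      set F : ℕ → ℝ → ℝ := fun l y => ∑ p ∈ Finset.HasAntidiagonal.antidiagonal l, x ^ l * (y ^ k * c p.1 y * c p.2 y) with hF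
      have hFi : ∀ l, Integrable (F l) := fun l =>
        integrable_finsetSum _ fun p _ => (hint k hk _ _).const_mul _
      have hS : Summable fun l => ∫ y, ‖F l y‖ := by
        refine Summable.of_nonneg_of_le (f := fun l : ℕ => (K ^ 2 * I0) * Real.exp (2 * K * 2) *
          (((l : ℝ) ^ 1 * (1 / 2) ^ l) + (1 / 2) ^ l)) (fun l => integral_nonneg fun y => norm_nonneg _) ?_ ?_
        · intro l
          calc ∫ y, ‖F l y‖ ≤ ∫ y, ∑ p ∈ Finset.HasAntidiagonal.antidiagonal l, ‖y ^ k * c p.1 y * c p.2 y‖ := by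
                refine integral_mono (hFi l).norm
                  (integrable_finsetSum _ fun p _ => (hint k hk _ _).norm) ?_
                intro y
                refine (norm_sum_le _ _).trans (Finset.sum_le_sum fun p _ => ?_)
                rw [norm_mul]
                refine mul_le_of_le_one_left (norm_nonneg _) ?_
                rw [norm_pow, Real.norm_eq_abs]
                exact pow_le_one₀ (abs_nonneg _) hx.le
            _ = ∑ p ∈ Finset.HasAntidiagonal.antidiagonal l, ∫ y, ‖y ^ k * c p.1 y * c p.2 y‖ :=
                integral_finsetSum _ fun p _ => (hint k hk _ _).norm
            _ ≤ ∑ p ∈ Finset.HasAntidiagonal.antidiagonal l, (K ^ 2 * I0) * Real.exp (2 * K * 2) / 2 ^ l := by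
                refine Finset.sum_le_sum fun p hp => ?_
                have := hnormint k hk p.1 p.2 2 (by norm_num)
                rwa [Finset.HasAntidiagonal.mem_antidiagonal.1 hp] at this
            _ = _ := by
                rw [Finset.sum_const, Finset.Nat.card_antidiagonal, nsmul_eq_mul]
                push_cast
                rw [one_div, inv_pow]
                ring
        · refine Summable.mul_left _ (Summable.add ?_ ?_)
          · exact summable_pow_mul_geometric_of_norm_lt_one 1 (by norm_num)
          · exact summable_geometric_of_lt_one (by norm_num) (by norm_num)
      have h3 := hasSum_integral_of_summable_integral_norm hFi hS
      refine hasSum_congr' h3 ?_ ?_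
      · funext l
        rw [hF]; simp only
        rw [integral_finsetSum _ fun p _ => (hint k hk _ _).const_mul _, Finset.sum_mul]
        refine Finset.sum_congr rfl fun p _ => ?_
        rw [integral_const_mul, mul_comm]
      · refine integral_congr_ae (Filter.Eventually.of_forall fun y => ?_)
        simp only
        have hsn : Summable fun j => ‖c j y * x ^ j‖ := by
          refine Summable.of_nonneg_of_le (f := fun j : ℕ => K * Real.exp (K * 2) / (1 + |y|) ^ (d + 1) * (1 / 2) ^ j)
            (fun j => norm_nonneg _) (fun j => ?_) ?_
          · rw [norm_mul, norm_pow, Real.norm_eq_abs, Real.norm_eq_abs]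
            calc |c j y| * |x| ^ j ≤ |c j y| * 1 := by
                  gcongr; exact pow_le_one₀ (abs_nonneg _) hx.le
              _ ≤ _ := by
                  rw [mul_one]
                  refine (hbd 2 (by norm_num) j y).trans (le_of_eq ?_)
                  rw [one_div, inv_pow]; ring
          · exact Summable.mul_left _ (summable_geometric_of_lt_one (by norm_num) (by norm_num))
        have h4 := tsum_mul_tsum_eq_tsum_sum_antidiagonal_of_summable_norm hsn hsn
        rw [(hsum y x).tsum_eq] at h4
        rw [sq, h4, ← tsum_mul_left]
        refine tsum_congr fun l => ?_
        rw [hF]; simp only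
        rw [Finset.mul_sum]
        refine Finset.sum_congr rfl fun p hp => ?_
        rw [← Finset.HasAntidiagonal.mem_antidiagonal.1 hp, pow_add]; ring
    · intro x _
      have e1 : ∫ y : ℝ, y ^ k * h (x - y) ^ 2 = ∫ y : ℝ, (x + y) ^ k * h (-y) ^ 2 := by
        rw [← integral_add_left_eq_self (fun y : ℝ => y ^ k * h (x - y) ^ 2) x]
        simp
      have e2 : ∫ y : ℝ, (x + y) ^ k * h (-y) ^ 2 =
          ∑ l ∈ Finset.range (k + 1), (Nat.choose k l : ℝ) * μ (k - l) * x ^ l := by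
        have : ∀ y : ℝ, (x + y) ^ k * h (-y) ^ 2 = ∑ l ∈ Finset.range (k + 1),
            ((Nat.choose k l : ℝ) * x ^ l) * (y ^ (k - l) * h (-y) ^ 2) := by
          intro y
          rw [add_pow, Finset.sum_mul]
          refine Finset.sum_congr rfl fun l _ => ?_
          ring
        simp_rw [this]
        rw [integral_finsetSum _ fun l _ => (hhint (k - l) (by omega)).const_mul _]
        refine Finset.sum_congr rfl fun l _ => ?_
        rw [integral_const_mul]; ring
      rw [e1, e2]
      have h5 := hasSum_sum_of_ne_finset_zero (L := SummationFilter.unconditional ℕ) (f := fun l => (if l ≤ k then (Nat.choose k l : ℝ) * μ (k - l) else 0) * x ^ l)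
        (s := Finset.range (k + 1)) (fun l hl => by
          have : ¬ l ≤ k := by simpa [Nat.lt_succ_iff] using hl
          simp [this])
      refine hasSum_congr' h5 rfl ?_
      refine Finset.sum_congr rfl fun l hl => ?_
      have : l ≤ k := by simpa [Nat.lt_succ_iff] using hl
      simp [this]
  -- normalise
  have hsJ : 0 < √J := Real.sqrt_pos.2 hJ
  have hresc : ∀ k i j, (fun y : ℝ => y ^ k * (c i y / √J) * (c j y / √J)) =
      fun y => J⁻¹ * (y ^ k * c i y * c j y) := by
    intro k i j
    funext y
    have : J⁻¹ = (√J)⁻¹ * (√J)⁻¹ := by rw [← mul_inv, Real.mul_self_sqrt hJ.le]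
    rw [this, div_eq_mul_inv, div_eq_mul_inv]; ring
  refine ⟨fun j y => c j y / √J, J⁻¹ * (K ^ 2 * I0), 2 * K, fun q => J⁻¹ * μ q, by positivity, by positivity, ?_, ?_, ?_, ?_⟩
  · simp only [hμ]
    simp only [pow_zero, one_mul]
    rw [← hJdef]; field_simp
  · intro k hk i j
    simp only [hresc]
    exact (hint k hk i j).const_mul _
  · intro k hk i j ρ hρ
    simp only [hresc]
    rw [integral_const_mul, abs_mul, abs_of_nonneg (by positivity : 0 ≤ J⁻¹)]
    have h1 := (norm_integral_le_integral_norm (fun y : ℝ => y ^ k * c i y * c j y)).trans (hnormint k hk i j ρ hρ)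
    rw [Real.norm_eq_abs] at h1
    calc _ ≤ J⁻¹ * ((K ^ 2 * I0) * Real.exp (2 * K * ρ) / ρ ^ (i + j)) := by gcongr
      _ = _ := by ring
  · intro k hk l
    simp only [hresc, integral_const_mul]
    rw [← Finset.mul_sum, hid k hk l]
    split_ifs
    · ring
    · simp

lemma summable_pow_div_half (A : ℝ) : Summable fun l : ℕ => A ^ l / (Nat.factorial (l / 2) : ℝ) := by
  have h1 : Summable fun j : ℕ => (A ^ 2) ^ j / (Nat.factorial j : ℝ) := Real.summable_pow_div_factorial _
  have h2 := h1.mul_left A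
  have := HasSum.even_add_odd (f := fun l : ℕ => A ^ l / (Nat.factorial (l / 2) : ℝ))
    (m := ∑' j : ℕ, (A ^ 2) ^ j / (Nat.factorial j : ℝ))
    (m' := ∑' j : ℕ, A * ((A ^ 2) ^ j / (Nat.factorial j : ℝ))) ?_ ?_
  · exact this.summable
  · refine hasSum_congr' h1.hasSum ?_ rfl
    funext j
    have : 2 * j / 2 = j := by omega
    simp only [this, pow_mul]
  · refine hasSum_congr' h2.hasSum ?_ rfl
    funext j
    have : (2 * j + 1) / 2 = j := by omega
    simp only [this, pow_mul, pow_succ]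
    ring

lemma wt_le (B : ℝ) (hB : 0 ≤ B) (l : ℕ) :
    wt B l / (l : ℝ) ^ l ≤ (max B 1) ^ l / (Nat.factorial (l / 2) : ℝ) := by
  unfold wt
  have hf : 0 < (Nat.factorial (l / 2) : ℝ) := by positivity
  have hl : 0 < (l : ℝ) ^ l := by
    rcases Nat.eq_zero_or_pos l with h | h
    · simp [h]
    · positivity
  rw [div_le_div_iff₀ hl hf]
  have e1 : B ^ ((l + 1) / 2) ≤ (max B 1) ^ l :=
    (pow_le_pow_left₀ hB (le_max_left _ _) _).trans (pow_le_pow_right₀ (le_max_right _ _) (by omega))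
  have e2 : (Nat.factorial ((l + 1) / 2) : ℝ) * (Nat.factorial (l / 2) : ℝ) ≤ (l : ℝ) ^ l := by
    have h1 : Nat.factorial ((l + 1) / 2) * Nat.factorial (l / 2) ∣ Nat.factorial ((l + 1) / 2 + l / 2) :=
      Nat.factorial_mul_factorial_dvd_factorial_add _ _
    have h2 : (l + 1) / 2 + l / 2 = l := by omega
    rw [h2] at h1
    have h3 := (Nat.le_of_dvd (Nat.factorial_pos _) h1).trans (Nat.factorial_le_pow l)
    exact_mod_cast h3
  calc B ^ ((l + 1) / 2) * (Nat.factorial ((l + 1) / 2) : ℝ) * (Nat.factorial (l / 2) : ℝ)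
      = B ^ ((l + 1) / 2) * ((Nat.factorial ((l + 1) / 2) : ℝ) * (Nat.factorial (l / 2) : ℝ)) := by ring
    _ ≤ (max B 1) ^ l * (l : ℝ) ^ l := by gcongr

lemma wt_nonneg' (B : ℝ) (hB : 0 ≤ B) (l : ℕ) : 0 ≤ wt B l := by unfold wt; positivity

lemma exists_kernel (d : ℕ) (B : ℝ) (hB : 0 ≤ B) (η : ℝ) (hη : 0 < η) :
    ∃ (r : ℕ) (c : ℕ → ℝ → ℝ), d ≤ r ∧
      (∀ k ≤ d, ∀ i j, Integrable (fun y : ℝ => y ^ k * c i y * c j y)) ∧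
      ∀ k ≤ d, ∑ l ∈ Finset.range (2 * r + 1),
        |(∑ p ∈ (Finset.range (r + 1) ×ˢ Finset.range (r + 1)).filter (fun p => p.1 + p.2 = l),
          ∫ y : ℝ, y ^ k * c p.1 y * c p.2 y) - (if l = k then 1 else 0)| * wt B l ≤ η := by
  obtain ⟨c, D, K, ν, hD, hK, hν, hint, hbd, hid⟩ := exists_base d
  set E : ℝ := ∑ k ∈ Finset.range (d + 1), ∑ l ∈ Finset.range (d + 1),
    |(Nat.choose k l : ℝ) * ν (k - l)| * wt B l with hE
  have hE0 : 0 ≤ E := Finset.sum_nonneg fun k _ => Finset.sum_nonneg fun l _ =>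
    mul_nonneg (abs_nonneg _) (wt_nonneg' B hB l)
  set τ : ℝ := 1 + 2 * E / η with hτ
  have hτ1 : 1 ≤ τ := by rw [hτ]; have : 0 ≤ 2 * E / η := by positivity
                         linarith
  have hτ0 : 0 < τ := by linarith
  have hEτ : E / τ ≤ η / 2 := by
    rw [div_le_iff₀ hτ0, hτ]
    have : η / 2 * (1 + 2 * E / η) = η / 2 + E := by field_simp
    rw [this]; linarith
  -- tail
  set T : ℕ → ℝ := fun l => ((l : ℝ) + 1) * (τ ^ l * (D * Real.exp (K * l) / (l : ℝ) ^ l)) * wt B l with hT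
  have hTn : ∀ l, 0 ≤ T l := fun l => by
    have := wt_nonneg' B hB l
    simp only [hT]; positivity
  have hTs : Summable T := by
    refine Summable.of_nonneg_of_le hTn (fun l => ?_)
      ((summable_pow_div_half (2 * τ * Real.exp K * max B 1)).mul_left D)
    have h1 : ((l : ℝ) + 1) ≤ 2 ^ l := by exact_mod_cast Nat.lt_two_pow_self
    have h2 := wt_le B hB l
    have h3 : Real.exp (K * l) = Real.exp K ^ l := by rw [← Real.exp_nat_mul]; ring_nf
    have h4 : 0 ≤ wt B l / (l : ℝ) ^ l := div_nonneg (wt_nonneg' B hB l) (by positivity)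
    calc T l = ((l : ℝ) + 1) * (τ ^ l * D * Real.exp K ^ l) * (wt B l / (l : ℝ) ^ l) := by
          simp only [hT, h3]; ring
      _ ≤ 2 ^ l * (τ ^ l * D * Real.exp K ^ l) * ((max B 1) ^ l / (Nat.factorial (l / 2) : ℝ)) := by
          gcongr
      _ = _ := by rw [mul_pow, mul_pow, mul_pow]; ring
  obtain ⟨s, hs⟩ := summable_iff_vanishing_norm.1 hTs (η / 2) (by positivity)
  set r : ℕ := max d (s.sup id) with hr
  have hdr : d ≤ r := le_max_left _ _
  set c' : ℕ → ℝ → ℝ := fun j y => √τ * τ ^ j * c j (τ * y) with hc'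
  have hfun : ∀ k i j, (fun y : ℝ => y ^ k * c' i y * c' j y) = fun y =>
      (τ ^ (i + j + 1) / τ ^ k) * ((τ * y) ^ k * c i (τ * y) * c j (τ * y)) := by
    intro k i j; funext y
    have : τ ^ (i + j + 1) = √τ * √τ * τ ^ i * τ ^ j := by
      rw [Real.mul_self_sqrt hτ0.le]; ring
    rw [this, mul_pow]; simp only [hc']
    field_simp
  have hint' : ∀ k ≤ d, ∀ i j, Integrable (fun y : ℝ => y ^ k * c' i y * c' j y) := by
    intro k hk i j
    rw [hfun]
    exact ((hint k hk i j).comp_mul_left' hτ0.ne').const_mul _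
  have hval : ∀ k i j, ∫ y : ℝ, y ^ k * c' i y * c' j y =
      τ ^ (i + j) / τ ^ k * ∫ y : ℝ, y ^ k * c i y * c j y := by
    intro k i j
    rw [hfun, integral_const_mul, Measure.integral_comp_mul_left (fun y => y ^ k * c i y * c j y) τ,
      abs_of_pos (by positivity), smul_eq_mul]
    field_simp
    ring
  refine ⟨r, c', hdr, hint', fun k hk => ?_⟩
  simp only [hval]
  set S : ℕ → Finset (ℕ × ℕ) := fun l =>
    (Finset.range (r + 1) ×ˢ Finset.range (r + 1)).filter (fun p => p.1 + p.2 = l) with hS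
  have hSsub : ∀ l, S l ⊆ Finset.HasAntidiagonal.antidiagonal l := by
    intro l p hp
    rw [Finset.HasAntidiagonal.mem_antidiagonal]
    exact (Finset.mem_filter.1 hp).2
  have hSeq : ∀ l ≤ r, S l = Finset.HasAntidiagonal.antidiagonal l := by
    intro l hl
    refine Finset.Subset.antisymm (hSsub l) fun p hp => ?_
    rw [Finset.HasAntidiagonal.mem_antidiagonal] at hp
    simp only [hS, Finset.mem_filter, Finset.mem_product, Finset.mem_range]
    omega
  have hSval : ∀ l, ∑ p ∈ S l, τ ^ (p.1 + p.2) / τ ^ k * ∫ y : ℝ, y ^ k * c p.1 y * c p.2 y =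
      τ ^ l / τ ^ k * ∑ p ∈ S l, ∫ y : ℝ, y ^ k * c p.1 y * c p.2 y := by
    intro l
    rw [Finset.mul_sum]
    refine Finset.sum_congr rfl fun p hp => ?_
    rw [(Finset.mem_filter.1 hp).2]
  have hsplit : Finset.range (2 * r + 1) = Finset.range (r + 1) ∪ Finset.Ico (r + 1) (2 * r + 1) := by
    ext l; simp only [Finset.mem_range, Finset.mem_union, Finset.mem_Ico]; omega
  have hdisj : Disjoint (Finset.range (r + 1)) (Finset.Ico (r + 1) (2 * r + 1)) := by
    rw [Finset.disjoint_left]; intro l; simp only [Finset.mem_range, Finset.mem_Ico]; omega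
  rw [hsplit, Finset.sum_union hdisj]
  have p1 : ∑ l ∈ Finset.range (r + 1), |(∑ p ∈ S l, τ ^ (p.1 + p.2) / τ ^ k *
      ∫ y : ℝ, y ^ k * c p.1 y * c p.2 y) - (if l = k then 1 else 0)| * wt B l ≤ η / 2 := by
    refine le_trans ?_ hEτ
    have hdr' : Finset.range (d + 1) ⊆ Finset.range (r + 1) := by
      intro l; simp only [Finset.mem_range]; omega
    have z : ∀ l ∈ Finset.range (r + 1), |(∑ p ∈ S l, τ ^ (p.1 + p.2) / τ ^ k *
      ∫ y : ℝ, y ^ k * c p.1 y * c p.2 y) - (if l = k then 1 else 0)| * wt B l ≤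
        if l ∈ Finset.range (d + 1) then |(Nat.choose k l : ℝ) * ν (k - l)| * wt B l / τ else 0 := by
      intro l hl
      have hl' : l ≤ r := by simpa [Nat.lt_succ_iff] using hl
      have hw := wt_nonneg' B hB l
      rw [hSval, hSeq l hl', hid k hk l]
      rcases lt_trichotomy l k with h | h | h
      · have : l ∈ Finset.range (d + 1) := by simp; omega
        rw [if_pos h.le, if_neg h.ne, if_pos this, sub_zero, abs_mul, abs_of_pos (by positivity)]
        have e1 : τ ^ l / τ ^ k ≤ 1 / τ := by
          rw [div_le_div_iff₀ (by positivity) hτ0, one_mul, ← pow_succ]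
          exact pow_le_pow_right₀ hτ1 h
        calc _ ≤ 1 / τ * |(Nat.choose k l : ℝ) * ν (k - l)| * wt B l := by gcongr
          _ = _ := by ring
      · subst h
        have : τ ^ l / τ ^ l = 1 := div_self (by positivity)
        simp only [le_refl, if_true, this, Nat.choose_self, Nat.sub_self, hν]
        norm_num
        split_ifs <;> positivity
      · rw [if_neg (by omega), if_neg (by omega), mul_zero, sub_zero, abs_zero, zero_mul]
        split_ifs <;> positivity
    refine (Finset.sum_le_sum z).trans ?_
    rw [← Finset.sum_filter, Finset.filter_mem_eq_inter, Finset.inter_eq_right.2 hdr', ← Finset.sum_div]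
    gcongr
    rw [hE]
    exact Finset.single_le_sum (f := fun k => ∑ l ∈ Finset.range (d + 1),
      |(Nat.choose k l : ℝ) * ν (k - l)| * wt B l)
      (fun k _ => Finset.sum_nonneg fun l _ => mul_nonneg (abs_nonneg _) (wt_nonneg' B hB l))
      (by simp; omega)
  have p2 : ∑ l ∈ Finset.Ico (r + 1) (2 * r + 1), |(∑ p ∈ S l, τ ^ (p.1 + p.2) / τ ^ k *
      ∫ y : ℝ, y ^ k * c p.1 y * c p.2 y) - (if l = k then 1 else 0)| * wt B l ≤ η / 2 := by
    have hd2 : Disjoint (Finset.Ico (r + 1) (2 * r + 1)) s := by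
      rw [Finset.disjoint_left]
      intro l hl hls
      have : l ≤ s.sup id := Finset.le_sup (f := id) hls
      have h2 : s.sup id ≤ r := le_max_right _ _
      simp only [Finset.mem_Ico] at hl
      omega
    have h1 := (hs _ hd2).le
    rw [Real.norm_eq_abs, abs_of_nonneg (Finset.sum_nonneg fun l _ => hTn l)] at h1
    refine (Finset.sum_le_sum fun l hl => ?_).trans h1
    simp only [Finset.mem_Ico] at hl
    have hw := wt_nonneg' B hB l
    rw [if_neg (by omega), sub_zero, hSval]
    simp only [hT]
    refine mul_le_mul_of_nonneg_right ?_ hw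
    have hl1 : (1 : ℝ) ≤ l := by exact_mod_cast (by omega : 1 ≤ l)
    have q1 : |∑ p ∈ S l, ∫ y : ℝ, y ^ k * c p.1 y * c p.2 y| ≤
        ((l : ℝ) + 1) * (D * Real.exp (K * l) / (l : ℝ) ^ l) := by
      refine (Finset.abs_sum_le_sum_abs _ _).trans ?_
      refine (Finset.sum_le_sum (g := fun _ => D * Real.exp (K * l) / (l : ℝ) ^ l) fun p hp => ?_).trans ?_
      · have := hbd k hk p.1 p.2 l hl1
        rwa [(Finset.mem_filter.1 hp).2] at this
      · rw [Finset.sum_const, nsmul_eq_mul]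
        have := Finset.card_le_card (hSsub l)
        rw [Finset.Nat.card_antidiagonal] at this
        have h' : ((S l).card : ℝ) ≤ (l : ℝ) + 1 := by exact_mod_cast this
        gcongr
    have q2 : τ ^ l / τ ^ k ≤ τ ^ l := div_le_self (by positivity) (one_le_pow₀ hτ1)
    rw [abs_mul, abs_of_pos (by positivity)]
    calc _ ≤ τ ^ l * (((l : ℝ) + 1) * (D * Real.exp (K * l) / (l : ℝ) ^ l)) := by gcongr
      _ = _ := by ring
  linarith

lemma sumSq_sum {ι A : Type*} [CommSemiring A] (s : Finset ι) (f : ι → A)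
    (h : ∀ i ∈ s, IsSumSq (f i)) : IsSumSq (∑ i ∈ s, f i) := by
  classical
  induction s using Finset.induction_on with
  | empty => simp
  | insert a s ha ih =>
    rw [Finset.sum_insert ha]
    exact (h a (Finset.mem_insert_self _ _)).add (ih fun i hi => h i (Finset.mem_insert_of_mem hi))

lemma gram_sos {n : ℕ} {ι : Type*} [Fintype ι] [DecidableEq ι] (z : ι → MvPolynomial (Fin n) ℝ)
    (M : Matrix ι ι ℝ) (hM : M.PosSemidef) :
    IsSumSq (∑ a, ∑ b, C (M a b) * (z a * z b)) := by
  obtain ⟨m, v, hv⟩ := Matrix.posSemidef_iff_eq_sum_vecMulVec.1 hM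
  have e : ∑ a, ∑ b, C (M a b) * (z a * z b) =
      ∑ i, (∑ a, C (v i a) * z a) * (∑ a, C (v i a) * z a) := by
    have : ∀ a b, M a b = ∑ i, v i a * v i b := by
      intro a b; rw [hv, Matrix.sum_apply]; simp [Matrix.vecMulVec_apply]
    simp_rw [this, map_sum, Finset.sum_mul_sum, Finset.sum_mul]
    symm
    rw [Finset.sum_comm]
    refine Finset.sum_congr rfl fun a _ => ?_
    rw [Finset.sum_comm]
    refine Finset.sum_congr rfl fun b _ => ?_
    refine Finset.sum_congr rfl fun i _ => ?_
    rw [map_mul]; ring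
  refine sumSq_congr (sumSq_sum Finset.univ _ fun i _ => IsSumSq.mul_self _) e

lemma smoothed_sos {n : ℕ} (F : MvPolynomial (Fin n) ℝ) (hF : ∀ x, 0 ≤ eval x F) (d r : ℕ)
    (hd : ∀ γ ∈ F.support, ∀ i, γ i ≤ d) (c : ℕ → ℝ → ℝ)
    (hint : ∀ k ≤ d, ∀ i j, Integrable (fun y : ℝ => y ^ k * c i y * c j y)) :
    IsSumSq (∑ γ ∈ F.support, C (coeff γ F) * ∏ i, ∑ p ∈ Finset.range (r + 1) ×ˢ Finset.range (r + 1),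
      C (∫ y : ℝ, y ^ (γ i) * c p.1 y * c p.2 y) * (X i ^ (p.1 + p.2) : MvPolynomial (Fin n) ℝ)) := by
  set Q : Matrix (Fin n → Fin (r + 1)) (Fin n → Fin (r + 1)) ℝ := fun α β =>
    ∑ γ ∈ F.support, coeff γ F * ∏ i, ∫ y : ℝ, y ^ (γ i) * c (α i) y * c (β i) y with hQ
  have hI : ∀ γ ∈ F.support, ∀ α β : Fin n → Fin (r + 1), Integrable (fun y : Fin n → ℝ =>
      ∏ i, (y i ^ (γ i) * c (α i) (y i) * c (β i) (y i))) := by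
    intro γ hγ α β
    exact Integrable.fintype_prod (f := fun i y => y ^ (γ i) * c (α i) y * c (β i) y)
      (fun i => hint _ (hd γ hγ i) _ _)
  set q : (Fin n → Fin (r + 1)) → (Fin n → Fin (r + 1)) → (Fin n → ℝ) → ℝ := fun α β y =>
    ∑ γ ∈ F.support, coeff γ F * ∏ i, (y i ^ (γ i) * c (α i) (y i) * c (β i) (y i)) with hq
  have hqi : ∀ α β, Integrable (q α β) := fun α β =>
    integrable_finsetSum _ fun γ hγ => (hI γ hγ α β).const_mul _
  have hQq : ∀ α β, Q α β = ∫ y, q α β y := by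
    intro α β
    simp only [hQ, hq]
    rw [integral_finsetSum _ fun γ hγ => (hI γ hγ α β).const_mul _]
    refine Finset.sum_congr rfl fun γ hγ => ?_
    rw [integral_const_mul, integral_fintype_prod_volume_eq_prod (fun i y => y ^ (γ i) * c (α i) y * c (β i) y)]
  have hqe : ∀ α β y, q α β y = eval y F * ((∏ i, c (α i) (y i)) * ∏ i, c (β i) (y i)) := by
    intro α β y
    simp only [hq]
    rw [eval_eq', Finset.sum_mul]
    refine Finset.sum_congr rfl fun γ hγ => ?_
    rw [Finset.prod_mul_distrib, Finset.prod_mul_distrib]; ring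
  have hPSD : Q.PosSemidef := by
    refine Matrix.PosSemidef.of_dotProduct_mulVec_nonneg ?_ ?_
    · ext α β
      rw [Matrix.conjTranspose_apply, star_trivial, hQq, hQq]
      congr 1; funext y; rw [hqe, hqe]; ring
    · intro v
      have : star v ⬝ᵥ (Q.mulVec v) = ∫ y, ∑ α, ∑ β, v α * v β * q α β y := by
        rw [integral_finsetSum _ fun α _ => integrable_finsetSum _ fun β _ => (hqi α β).const_mul _]
        rw [dotProduct]
        refine Finset.sum_congr rfl fun α _ => ?_
        rw [integral_finsetSum _ fun β _ => (hqi α β).const_mul _, Matrix.mulVec, dotProduct, Finset.mul_sum]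
        refine Finset.sum_congr rfl fun β _ => ?_
        rw [integral_const_mul, hQq]; simp; ring
      rw [this]
      refine integral_nonneg fun y => ?_
      have : ∑ α, ∑ β, v α * v β * q α β y = eval y F * ((∑ α, v α * ∏ i, c (α i) (y i)) *
          (∑ α, v α * ∏ i, c (α i) (y i))) := by
        rw [Finset.sum_mul_sum, Finset.mul_sum]
        refine Finset.sum_congr rfl fun α _ => ?_
        rw [Finset.mul_sum]
        refine Finset.sum_congr rfl fun β _ => ?_
        rw [hqe]; ring
      show 0 ≤ ∑ α, ∑ β, v α * v β * q α β y
      rw [this]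
      exact mul_nonneg (hF y) (mul_self_nonneg _)
  refine sumSq_congr (gram_sos (fun α : Fin n → Fin (r + 1) => ∏ i, (X i ^ (α i : ℕ) : MvPolynomial (Fin n) ℝ)) Q hPSD) ?_
  have e1 : ∀ γ : Fin n →₀ ℕ, (∏ i, ∑ p ∈ Finset.range (r + 1) ×ˢ Finset.range (r + 1),
      C (∫ y : ℝ, y ^ (γ i) * c p.1 y * c p.2 y) * (X i ^ (p.1 + p.2) : MvPolynomial (Fin n) ℝ)) =
      ∑ α : Fin n → Fin (r + 1), ∑ β : Fin n → Fin (r + 1),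
        C (∏ i, ∫ y : ℝ, y ^ (γ i) * c (α i) y * c (β i) y) *
          ((∏ i, (X i ^ (α i : ℕ))) * ∏ i, (X i ^ (β i : ℕ))) := by
    intro γ
    have e2 : ∀ i, ∑ p ∈ Finset.range (r + 1) ×ˢ Finset.range (r + 1),
      C (∫ y : ℝ, y ^ (γ i) * c p.1 y * c p.2 y) * (X i ^ (p.1 + p.2) : MvPolynomial (Fin n) ℝ) =
      ∑ p : Fin (r + 1) × Fin (r + 1),
      C (∫ y : ℝ, y ^ (γ i) * c p.1 y * c p.2 y) * (X i ^ (p.1 + p.2 : ℕ) : MvPolynomial (Fin n) ℝ) := by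
      intro i
      rw [Finset.sum_product, Fintype.sum_prod_type, Finset.sum_range]
      refine Finset.sum_congr rfl fun a _ => ?_
      rw [Finset.sum_range]
    simp_rw [e2]
    rw [Fintype.prod_sum, ← Fintype.sum_prod_type',
      ← Equiv.sum_comp (Equiv.arrowProdEquivProdArrow (Fin n) (fun _ => Fin (r + 1)) (fun _ => Fin (r + 1)))]
    refine Finset.sum_congr rfl fun p _ => ?_
    simp only [Equiv.arrowProdEquivProdArrow, Equiv.coe_fn_mk]
    rw [map_prod, ← Finset.prod_mul_distrib, ← Finset.prod_mul_distrib]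
    refine Finset.prod_congr rfl fun i _ => ?_
    rw [pow_add]
  simp_rw [e1, hQ, map_sum, Finset.sum_mul, Finset.mul_sum]
  rw [Finset.sum_comm]
  refine Finset.sum_congr rfl fun α _ => ?_
  rw [Finset.sum_comm]
  refine Finset.sum_congr rfl fun β _ => ?_
  refine Finset.sum_congr rfl fun γ _ => ?_
  rw [map_mul]; ring

lemma abs_prod_sub_le {n : ℕ} (a b : Fin n → ℝ) :
    |∏ i, b i - ∏ i, a i| ≤ ∏ i, (|b i| + |a i - b i|) - ∏ i, |b i| := by
  suffices H : ∀ s : Finset (Fin n), |∏ i ∈ s, b i - ∏ i ∈ s, a i| ≤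
      ∏ i ∈ s, (|b i| + |a i - b i|) - ∏ i ∈ s, |b i| from H Finset.univ
  intro s
  induction s using Finset.induction_on with
  | empty => simp
  | insert j s hj ih =>
    rw [Finset.prod_insert hj, Finset.prod_insert hj, Finset.prod_insert hj, Finset.prod_insert hj]
    have h1 : |∏ i ∈ s, b i| = ∏ i ∈ s, |b i| := Finset.abs_prod _ _
    set A := ∏ i ∈ s, a i
    set B := ∏ i ∈ s, b i
    set P := ∏ i ∈ s, (|b i| + |a i - b i|)
    set R := ∏ i ∈ s, |b i|
    have e : b j * B - a j * A = (b j * (B - A) + (a j - b j) * (B - A)) - (a j - b j) * B := by ring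
    rw [e]
    have h2 : |b j * (B - A) + (a j - b j) * (B - A) - (a j - b j) * B| ≤
        |b j| * |B - A| + |a j - b j| * |B - A| + |a j - b j| * |B| := by
      refine (abs_sub _ _).trans ?_
      rw [← abs_mul, ← abs_mul, ← abs_mul]
      gcongr
      exact abs_add_le _ _
    have h3 := mul_le_mul_of_nonneg_left ih (abs_nonneg (b j))
    have h4 := mul_le_mul_of_nonneg_left ih (abs_nonneg (a j - b j))
    rw [h1] at h2
    nlinarith

lemma exists_eta {n : ℕ} (F : MvPolynomial (Fin n) ℝ) (W : ℕ → ℝ) (ε : ℝ) (hε : 0 < ε) :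
    ∃ η > 0, ∑ γ ∈ F.support, |coeff γ F| * (∏ i, (W (γ i) + η) - ∏ i, W (γ i)) ≤ ε := by
  have hc : Continuous fun η : ℝ => ∑ γ ∈ F.support,
      |coeff γ F| * (∏ i, (W (γ i) + η) - ∏ i, W (γ i)) := by fun_prop
  have h0 : ∀ᶠ η in 𝓝[>] (0 : ℝ), ∑ γ ∈ F.support,
      |coeff γ F| * (∏ i, (W (γ i) + η) - ∏ i, W (γ i)) < ε := by
    refine (hc.tendsto 0).mono_left nhdsWithin_le_nhds |>.eventually_lt_const ?_
    simpa using hε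
  obtain ⟨η, h1, h2⟩ := (h0.and self_mem_nhdsWithin).exists
  exact ⟨η, h2, h1.le⟩

lemma core {n : ℕ} (hn : 0 < n) (F : MvPolynomial (Fin n) ℝ) (hF : ∀ x, 0 ≤ eval x F) (ε : ℝ)
    (hε : 0 < ε) : ∃ r1, IsSumSq (F + C ε * theta n r1) := by
  set d := F.totalDegree with hdd
  have hd : ∀ γ ∈ F.support, ∀ i, γ i ≤ d := by
    intro γ hγ i
    refine le_trans ?_ (le_totalDegree hγ)
    exact (Finsupp.le_degree i γ)
  set B : ℝ := (n : ℝ) * 2 ^ n with hB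
  have hB0 : 0 ≤ B := by positivity
  set W := wt B with hW
  have hW0 : ∀ l, 0 ≤ W l := wt_nonneg' B hB0
  obtain ⟨η, hη, hηε⟩ := exists_eta F W ε hε
  obtain ⟨r, c, hdr, hint, hker⟩ := exists_kernel d B hB0 η hη
  have hG := smoothed_sos F hF d r hd c hint
  set a : ℕ → ℕ → ℝ := fun k l =>
    ∑ p ∈ (Finset.range (r + 1) ×ˢ Finset.range (r + 1)).filter (fun p => p.1 + p.2 = l),
          ∫ y : ℝ, y ^ k * c p.1 y * c p.2 y with ha
  set δ : ℕ → ℕ → ℝ := fun k l => if l = k then 1 else 0 with hδ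
  have hker' : ∀ k ≤ d, ∑ l : Fin (2 * r + 1), |a k l - δ k l| * W l ≤ η := by
    intro k hk
    have := hker k hk
    rw [Finset.sum_range] at this
    exact this
  -- rewrite of the smoothed polynomial
  have hP : ∀ (k : ℕ) (i : Fin n), ∑ p ∈ Finset.range (r + 1) ×ˢ Finset.range (r + 1),
      C (∫ y : ℝ, y ^ k * c p.1 y * c p.2 y) * (X i ^ (p.1 + p.2) : MvPolynomial (Fin n) ℝ) =
      ∑ l : Fin (2 * r + 1), C (a k l) * X i ^ (l : ℕ) := by
    intro k i
    rw [← Finset.sum_range (fun l => C (a k l) * (X i ^ l : MvPolynomial (Fin n) ℝ))]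
    rw [← Finset.sum_fiberwise_of_maps_to (g := fun p : ℕ × ℕ => p.1 + p.2) (t := Finset.range (2 * r + 1))]
    · refine Finset.sum_congr rfl fun l _ => ?_
      simp only [ha, map_sum, Finset.sum_mul]
      refine Finset.sum_congr rfl fun p hp => ?_
      rw [(Finset.mem_filter.1 hp).2]
    · intro p hp
      simp only [Finset.mem_product, Finset.mem_range] at hp ⊢
      omega
  have hX : ∀ k ≤ d, ∀ i : Fin n, (X i ^ k : MvPolynomial (Fin n) ℝ) =
      ∑ l : Fin (2 * r + 1), C (δ k l) * X i ^ (l : ℕ) := by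
    intro k hk i
    rw [← Finset.sum_range (fun l => C (δ k l) * (X i ^ l : MvPolynomial (Fin n) ℝ))]
    rw [Finset.sum_eq_single k]
    · simp [hδ]
    · intro l _ hl; simp [hδ, hl]
    · intro h; simp only [Finset.mem_range] at h; omega
  have hδW : ∀ k ≤ d, ∑ l : Fin (2 * r + 1), δ k l * W l = W k := by
    intro k hk
    rw [← Finset.sum_range (fun l => δ k l * W l), Finset.sum_eq_single k]
    · simp [hδ]
    · intro l _ hl; simp [hδ, hl]
    · intro h; simp only [Finset.mem_range] at h; omega
  have hδ0 : ∀ k l, 0 ≤ δ k l := by intro k l; simp only [hδ]; split_ifs <;> norm_num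
  simp_rw [hP] at hG
  set e : (Fin n →₀ ℕ) → (Fin n → Fin (2 * r + 1)) → ℝ := fun γ l =>
    ∏ i, δ (γ i) (l i) - ∏ i, a (γ i) (l i) with he
  set r1 := n * (r + 1) with hr1
  have hdiff : F = (∑ γ ∈ F.support, C (coeff γ F) * ∏ i, ∑ l : Fin (2 * r + 1), C (a (γ i) l) * X i ^ (l : ℕ)) +
      ∑ γ ∈ F.support, ∑ l : Fin n → Fin (2 * r + 1), C (coeff γ F * e γ l) * ∏ i, X i ^ (l i : ℕ) := by
    rw [← Finset.sum_add_distrib]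
    conv_lhs => rw [F.as_sum]
    refine Finset.sum_congr rfl fun γ hγ => ?_
    rw [monomial_eq, Finsupp.prod_fintype _ _ (by simp)]
    have e1 : (∏ i, X i ^ (γ i) : MvPolynomial (Fin n) ℝ) =
        ∏ i, ∑ l : Fin (2 * r + 1), C (δ (γ i) l) * X i ^ (l : ℕ) :=
      Finset.prod_congr rfl fun i _ => hX _ (hd γ hγ i) i
    rw [e1, Fintype.prod_sum, Fintype.prod_sum, Finset.mul_sum, Finset.mul_sum, ← Finset.sum_add_distrib]
    refine Finset.sum_congr rfl fun l _ => ?_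
    simp only [he]
    rw [Finset.prod_mul_distrib, Finset.prod_mul_distrib, map_mul, map_sub, map_prod, map_prod]
    ring
  have hbound : ∀ γ ∈ F.support, ∑ l : Fin n → Fin (2 * r + 1), |e γ l| * ∏ i, W (l i) ≤
      ∏ i, (W (γ i) + η) - ∏ i, W (γ i) := by
    intro γ hγ
    calc ∑ l : Fin n → Fin (2 * r + 1), |e γ l| * ∏ i, W (l i)
        ≤ ∑ l : Fin n → Fin (2 * r + 1), (∏ i, ((δ (γ i) (l i) + |a (γ i) (l i) - δ (γ i) (l i)|) * W (l i)) -
            ∏ i, (δ (γ i) (l i) * W (l i))) := by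
          refine Finset.sum_le_sum fun l _ => ?_
          have h1 := abs_prod_sub_le (fun i => a (γ i) (l i)) (fun i => δ (γ i) (l i))
          simp only [abs_of_nonneg (hδ0 _ _)] at h1
          rw [Finset.prod_mul_distrib, Finset.prod_mul_distrib, ← sub_mul]
          exact mul_le_mul_of_nonneg_right h1 (Finset.prod_nonneg fun i _ => hW0 _)
      _ = ∏ i, (∑ l : Fin (2 * r + 1), ((δ (γ i) l + |a (γ i) l - δ (γ i) l|) * W l)) -
          ∏ i, ∑ l : Fin (2 * r + 1), (δ (γ i) l * W l) := by
          rw [Finset.sum_sub_distrib, Fintype.prod_sum, Fintype.prod_sum]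
      _ ≤ _ := by
          have h2 : ∏ i, ∑ l : Fin (2 * r + 1), (δ (γ i) l * W l) = ∏ i, W (γ i) :=
            Finset.prod_congr rfl fun i _ => hδW _ (hd γ hγ i)
          rw [h2]
          refine sub_le_sub_right (Finset.prod_le_prod (fun i _ => ?_) fun i _ => ?_) _
          · exact Finset.sum_nonneg fun l _ => mul_nonneg (add_nonneg (hδ0 _ _) (abs_nonneg _)) (hW0 _)
          · simp_rw [add_mul]
            rw [Finset.sum_add_distrib, hδW _ (hd γ hγ i)]
            have := hker' _ (hd γ hγ i)
            linarith
  set tot : ℝ := ∑ γ ∈ F.support, ∑ l : Fin n → Fin (2 * r + 1), |coeff γ F * e γ l| * ∏ i, W (l i) with htot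
  have htotε : tot ≤ ε := by
    refine le_trans (Finset.sum_le_sum fun γ hγ => ?_) hηε
    simp_rw [abs_mul, mul_assoc]
    rw [← Finset.mul_sum]
    exact mul_le_mul_of_nonneg_left (hbound γ hγ) (abs_nonneg _)
  have hdom : ∀ γ ∈ F.support, ∀ l : Fin n → Fin (2 * r + 1),
      IsSumSq (C (coeff γ F * e γ l) * ∏ i, X i ^ (l i : ℕ) +
        C (|coeff γ F * e γ l| * ∏ i, W (l i)) * theta n r1) := by
    intro γ _ l
    refine sos_monomial_dom hn (fun i => (l i : ℕ)) r1 ?_ _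
    refine (Finset.sum_le_sum (g := fun _ => r + 1) fun i _ => ?_).trans ?_
    · have := (l i).2; omega
    · simp [hr1]
  refine ⟨r1, ?_⟩
  have hD := sumSq_sum F.support _ fun γ hγ => sumSq_sum Finset.univ _ fun l _ => hdom γ hγ l
  have hlast : IsSumSq (C (ε - tot) * theta n r1) :=
    (sumSq_C (by linarith)).mul (sumSq_theta n r1)
  refine sumSq_congr ((hG.add hD).add hlast) ?_
  have hCt : (C tot : MvPolynomial (Fin n) ℝ) * theta n r1 = ∑ γ ∈ F.support, ∑ l : Fin n → Fin (2 * r + 1),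
      C (|coeff γ F * e γ l| * ∏ i, W (l i)) * theta n r1 := by
    rw [htot, map_sum, Finset.sum_mul]
    refine Finset.sum_congr rfl fun γ _ => ?_
    rw [map_sum, Finset.sum_mul]
  simp_rw [Finset.sum_add_distrib]
  rw [← hCt, map_sub]
  conv_lhs => rw [hdiff]
  ring

lemma eval_theta {n : ℕ} (r : ℕ) (x : Fin n → ℝ) : eval x (theta n r) =
    ∑ k ∈ Finset.range (r + 1), ∑ i : Fin n, 1 / (Nat.factorial k : ℝ) * x i ^ (2 * k) := by
  simp [theta]

lemma theta_term_le {n : ℕ} (r : ℕ) (x : Fin n → ℝ) (k : ℕ) (hk : k ≤ r) (i : Fin n) :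
    1 / (Nat.factorial k : ℝ) * x i ^ (2 * k) ≤ eval x (theta n r) := by
  have h0 : ∀ k i, 0 ≤ 1 / (Nat.factorial k : ℝ) * x i ^ (2 * k) := fun k i => by
    have : 0 ≤ x i ^ (2 * k) := by rw [pow_mul]; positivity
    positivity
  rw [eval_theta]
  refine le_trans ?_ (Finset.single_le_sum (f := fun k => ∑ i : Fin n, 1 / (Nat.factorial k : ℝ) * x i ^ (2 * k))
    (fun k _ => Finset.sum_nonneg fun i _ => h0 k i) (Finset.mem_range.2 (Nat.lt_succ_of_le hk)))
  exact Finset.single_le_sum (f := fun i => 1 / (Nat.factorial k : ℝ) * x i ^ (2 * k))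
    (fun i _ => h0 k i) (Finset.mem_univ i)

lemma growth {n : ℕ} (hn : 0 < n) (f : MvPolynomial (Fin n) ℝ) (ε : ℝ) (hε : 0 < ε) :
    ∃ (r0 : ℕ) (R : ℝ), ∀ x : Fin n → ℝ, R ≤ ‖x‖ → 0 ≤ eval x f + ε * eval x (theta n r0) := by
  set d := f.totalDegree with hd
  set A : ℝ := ∑ γ ∈ f.support, |coeff γ f| with hA
  have hA0 : 0 ≤ A := Finset.sum_nonneg fun _ _ => abs_nonneg _
  refine ⟨d + 1, max 1 (A * (Nat.factorial (d + 1) : ℝ) / ε), fun x hx => ?_⟩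
  have ht1 : 1 ≤ ‖x‖ := (le_max_left _ _).trans hx
  have ht2 : A * (Nat.factorial (d + 1) : ℝ) / ε ≤ ‖x‖ := (le_max_right _ _).trans hx
  have h1 : |eval x f| ≤ A * ‖x‖ ^ d := by
    rw [eval_eq', hA, Finset.sum_mul]
    refine (Finset.abs_sum_le_sum_abs _ _).trans (Finset.sum_le_sum fun γ hγ => ?_)
    rw [abs_mul]
    refine mul_le_mul_of_nonneg_left ?_ (abs_nonneg _)
    rw [Finset.abs_prod]
    calc ∏ i, |x i ^ γ i| ≤ ∏ i, ‖x‖ ^ γ i := by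
          refine Finset.prod_le_prod (fun i _ => abs_nonneg _) fun i _ => ?_
          rw [abs_pow]
          exact pow_le_pow_left₀ (abs_nonneg _) (norm_le_pi_norm x i) _
      _ = ‖x‖ ^ (∑ i, γ i) := Finset.prod_pow_eq_pow_sum _ _ _
      _ ≤ ‖x‖ ^ d := by
          refine pow_le_pow_right₀ ht1 ?_
          have := le_totalDegree hγ
          rwa [Finsupp.sum_fintype _ _ (by simp)] at this
  haveI : Nonempty (Fin n) := ⟨⟨0, hn⟩⟩
  obtain ⟨i, hi⟩ : ∃ i, ‖x i‖ = ‖x‖ := by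
    obtain ⟨i, -, hi⟩ := Finset.exists_max_image Finset.univ (fun i => ‖x i‖) Finset.univ_nonempty
    refine ⟨i, le_antisymm (norm_le_pi_norm x i) ?_⟩
    exact (pi_norm_le_iff_of_nonneg (norm_nonneg _)).2 fun j => hi j (Finset.mem_univ j)
  have h2 := theta_term_le (d + 1) x (d + 1) le_rfl i
  have h3 : x i ^ (2 * (d + 1)) = ‖x‖ ^ (2 * (d + 1)) := by
    rw [pow_mul, pow_mul, ← hi, Real.norm_eq_abs, sq_abs]
  rw [h3] at h2
  have h4 : ‖x‖ ^ (d + 1) ≤ ‖x‖ ^ (2 * (d + 1)) := pow_le_pow_right₀ ht1 (by omega)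
  have hfac : 0 < (Nat.factorial (d + 1) : ℝ) := by positivity
  have h5 : A * ‖x‖ ^ d ≤ ε * (1 / (Nat.factorial (d + 1) : ℝ) * ‖x‖ ^ (2 * (d + 1))) := by
    calc A * ‖x‖ ^ d = ε * (1 / (Nat.factorial (d + 1) : ℝ) *
          ((A * (Nat.factorial (d + 1) : ℝ) / ε) * ‖x‖ ^ d)) := by field_simp
      _ ≤ ε * (1 / (Nat.factorial (d + 1) : ℝ) * (‖x‖ * ‖x‖ ^ d)) := by gcongr
      _ = ε * (1 / (Nat.factorial (d + 1) : ℝ) * ‖x‖ ^ (d + 1)) := by rw [pow_succ']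
      _ ≤ _ := by gcongr
  have h6 := mul_le_mul_of_nonneg_left h2 hε.le
  have h7 := neg_abs_le (eval x f)
  linarith

lemma exists_penalty {n : ℕ} (u g : (Fin n → ℝ) → ℝ) (hu : Continuous u) (hg : Continuous g)
    (hg0 : ∀ x, 0 ≤ g x) (h : ∀ x, g x = 0 → 0 < u x) (R : ℝ) (hR : ∀ x, R ≤ ‖x‖ → 0 ≤ u x) :
    ∃ lam, 0 ≤ lam ∧ ∀ x, 0 ≤ u x + lam * g x := by
  set S : Set (Fin n → ℝ) := Metric.closedBall 0 R ∩ {x | u x ≤ 0} with hS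
  have hSc : IsCompact S := (isCompact_closedBall 0 R).inter_right (isClosed_le hu continuous_const)
  have hout : ∀ x, x ∉ S → 0 ≤ u x := by
    intro x hx
    by_contra hc
    push Not at hc
    refine hx ⟨?_, hc.le⟩
    rw [mem_closedBall_zero_iff]
    by_contra h'
    push Not at h'
    linarith [hR x h'.le]
  rcases S.eq_empty_or_nonempty with he | hne
  · refine ⟨0, le_rfl, fun x => ?_⟩
    have := hout x (by rw [he]; simp)
    linarith
  · obtain ⟨x0, hx0, hm0⟩ := hSc.exists_isMinOn hne hg.continuousOn
    obtain ⟨x1, hx1, hm1⟩ := hSc.exists_isMinOn hne hu.continuousOn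
    have hpos : 0 < g x0 := by
      refine lt_of_le_of_ne (hg0 x0) fun h' => ?_
      have := h x0 h'.symm
      have h2 : u x0 ≤ 0 := hx0.2
      linarith
    have hu1 : u x1 ≤ 0 := hx1.2
    have hl : 0 ≤ -u x1 / g x0 := div_nonneg (by linarith) hpos.le
    refine ⟨-u x1 / g x0, hl, fun x => ?_⟩
    by_cases hx : x ∈ S
    · have a1 : u x1 ≤ u x := hm1 hx
      have a2 : g x0 ≤ g x := hm0 hx
      have a3 := mul_le_mul_of_nonneg_left a2 hl
      rw [div_mul_cancel₀ _ hpos.ne'] at a3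
      linarith
    · have := hout x hx
      have := mul_nonneg hl (hg0 x)
      linarith

lemma sum_sq_eq_zero' {m : ℕ} (a : Fin m → ℝ) (h : ∑ j, a j ^ 2 = 0) (j : Fin m) : a j = 0 := by
  have := (Finset.sum_eq_zero_iff_of_nonneg (fun i _ => sq_nonneg (a i))).1 h j (Finset.mem_univ j)
  exact pow_eq_zero_iff (two_ne_zero) |>.1 this

theorem sos_approx_on_algebraic_set (n m : ℕ) (g : Fin m → MvPolynomial (Fin n) ℝ)
    (f : MvPolynomial (Fin n) ℝ)
    (hf : ∀ x : Fin n → ℝ, (∀ j, eval x (g j) = 0) → 0 ≤ eval x f) :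
    ∀ ε : ℝ, 0 < ε →
      ∃ (r₀ : ℕ) (lam : Fin m → ℝ), (∀ j, 0 ≤ lam j) ∧
        ∀ r : ℕ, r₀ ≤ r →
          IsSOS (f + C ε * theta n r + ∑ j, C (lam j) * g j ^ 2) := by
  intro ε hε
  rcases Nat.eq_zero_or_pos n with hn | hn
  · subst hn
    set x : Fin 0 → ℝ := fun _ => 0 with hx
    set s : ℝ := ∑ j, (eval x (g j)) ^ 2 with hs
    have hs0 : 0 ≤ s := Finset.sum_nonneg fun j _ => sq_nonneg _
    refine ⟨0, fun _ => |eval x f| / s, fun _ => by positivity, fun r _ => ?_⟩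
    apply isSOS_of_isSumSq
    set p := f + C ε * theta 0 r + ∑ j, C (|eval x f| / s) * g j ^ 2 with hp
    have hpv : eval x p = eval x f + |eval x f| / s * s := by
      rw [hp, hs]
      simp [theta, Finset.mul_sum]
    have hpc : p = C (eval x p) := by
      rw [eq_C_of_isEmpty p]; simp
    rw [hpc]
    refine sumSq_C ?_
    rw [hpv]
    by_cases h0 : s = 0
    · rw [h0]; simp only [mul_zero, add_zero]
      exact hf x fun j => sum_sq_eq_zero' _ h0 j
    · rw [div_mul_cancel₀ _ h0]
      have := neg_abs_le (eval x f)
      linarith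
  · obtain ⟨r0, R, hR⟩ := growth hn f (ε / 2) (by positivity)
    obtain ⟨lam, hlam, hpen⟩ := exists_penalty (fun x => eval x f + ε / 2 * eval x (theta n r0))
      (fun x => ∑ j, (eval x (g j)) ^ 2)
      ((continuous_eval f).add (continuous_const.mul (continuous_eval _)))
      (continuous_finsetSum _ fun j _ => (continuous_eval _).pow 2)
      (fun x => Finset.sum_nonneg fun j _ => sq_nonneg _)
      (fun x hx => by
        have h1 := hf x fun j => sum_sq_eq_zero' _ hx j
        have h2 := theta_term_le r0 x 0 (Nat.zero_le _) ⟨0, hn⟩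
        simp only [Nat.factorial_zero, Nat.cast_one, div_one, mul_zero, pow_zero, mul_one] at h2
        have : 0 < ε / 2 * eval x (theta n r0) := mul_pos (by positivity) (by linarith)
        linarith) R hR
    obtain ⟨r1, hr1⟩ := core hn (f + C (ε / 2) * theta n r0 + ∑ j, C lam * g j ^ 2)
      (fun x => by
        have := hpen x
        simpa [Finset.mul_sum] using this) (ε / 2) (by positivity)
    refine ⟨max r0 r1, fun _ => lam, fun _ => hlam, fun r hr => ?_⟩
    apply isSOS_of_isSumSq
    have k1 := (sumSq_C (n := n) (by positivity : 0 ≤ ε / 2)).mul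
      (sumSq_theta_sub n ((le_max_left r0 r1).trans hr))
    have k2 := (sumSq_C (n := n) (by positivity : 0 ≤ ε / 2)).mul
      (sumSq_theta_sub n ((le_max_right r0 r1).trans hr))
    refine sumSq_congr ((hr1.add k1).add k2) ?_
    have e : (C ε : MvPolynomial (Fin n) ℝ) = C (ε / 2) + C (ε / 2) := by
      rw [← map_add]; congr 1; ring
    rw [e]; ring
end

section
/- Let g_1,…,g_m ∈ ℝ[x_1,…,x_n] and let V = {x ∈ ℝ^n : g_j(x) = 0 for j = 1,…,m}. Let f ∈ ℝ[x_1,…,x_n] be nonnegative on V. Then for every ε > 0 there exist r(ε) ∈ ℕ and a single nonnegative real scalar λ such that, for every r ≥ r(ε), the polynomial f + ε·θ_r + λ·∑_{j=1}^m g_j^2 is a sum of squares of real polynomials. -/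
open MvPolynomial MeasureTheory Filter Topology

namespace SOSA
section abs
variable {R : Type*} [CommRing R] [Algebra ℝ R] {L : R →ₗ[ℝ] ℝ}

lemma cs (hL : ∀ q, 0 ≤ L (q * q)) (a b : R) : L (a * b) ^ 2 ≤ L (a * a) * L (b * b) := by
  have h : ∀ t : ℝ, 0 ≤ L (a * a) * (t * t) + (2 * L (a * b)) * t + L (b * b) := by
    intro t
    have h1 := hL (t • a + b)
    have h2 : (t • a + b) * (t • a + b) = (t * t) • (a * a) + (2 * t) • (a * b) + b * b := by
      simp only [Algebra.smul_def, map_mul, map_ofNat]; ring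
    rw [h2, map_add, map_add, map_smul, map_smul, smul_eq_mul, smul_eq_mul] at h1
    linarith
  have := discrim_le_zero h
  unfold discrim at this
  nlinarith

lemma sq_add_le (hL : ∀ q, 0 ≤ L (q * q)) (a b : R) :
    L ((a + b) * (a + b)) ≤ 2 * L (a * a) + 2 * L (b * b) := by
  have h1 := hL (a - b)
  have h2 : (a + b) * (a + b) + (a - b) * (a - b) = (2:ℝ) • (a * a) + (2:ℝ) • (b * b) := by
    simp only [Algebra.smul_def, map_ofNat]; ring
  have h3 := congrArg L h2
  simp only [map_add, map_smul, smul_eq_mul] at h3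
  linarith

lemma pow_add_le (hL : ∀ q, 0 ≤ L (q * q)) (u v : R) (a : ℕ) :
    L ((u + v) ^ (2 * a)) ≤ 4 ^ a * (L (u ^ (2 * a)) + L (v ^ (2 * a))) := by
  have key : ∀ s d : R, 2 * L (s ^ (2 * a)) ≤ L ((s + d) ^ (2 * a)) + L ((s - d) ^ (2 * a)) := by
    intro s d
    rw [← map_add, sub_eq_add_neg, add_pow, add_pow, ← Finset.sum_add_distrib, map_sum]
    have hterm : ∀ j ∈ Finset.range (2 * a + 1), 0 ≤ L (s ^ j * d ^ (2 * a - j) * ((2 * a).choose j : R)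
        + s ^ j * (-d) ^ (2 * a - j) * ((2 * a).choose j : R)) := by
      intro j hj
      rcases Nat.even_or_odd j with ⟨k, hk⟩ | ⟨k, hk⟩
      · have hj' : j ≤ 2 * a := by simpa [Nat.lt_succ_iff] using hj
        have h2 : 2 * a - j = 2 * (a - k) := by omega
        have : s ^ j * d ^ (2 * a - j) * ((2 * a).choose j : R)
            + s ^ j * (-d) ^ (2 * a - j) * ((2 * a).choose j : R) =
            (2 * ((2 * a).choose j : ℝ)) • ((s ^ k * d ^ (a - k)) * (s ^ k * d ^ (a - k))) := by
          rw [h2, hk, Algebra.smul_def]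
          rw [pow_mul (-d), neg_sq]
          simp only [map_mul, map_ofNat, map_natCast]
          ring
        rw [this, map_smul, smul_eq_mul]
        exact mul_nonneg (by positivity) (hL _)
      · have hj' : j ≤ 2 * a := by simpa [Nat.lt_succ_iff] using hj
        have : Odd (2 * a - j) := ⟨a - k - 1, by omega⟩
        rw [this.neg_pow]
        simp
    have := Finset.single_le_sum hterm (Finset.mem_range.2 (Nat.lt_succ_self (2 * a)))
    refine le_trans (le_of_eq ?_) this
    simp [two_mul]
  have h := key (u + v) (u - v)
  have e1 : u + v + (u - v) = (2:ℝ) • u := by simp only [Algebra.smul_def, map_ofNat]; ring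
  have e2 : u + v - (u - v) = (2:ℝ) • v := by simp only [Algebra.smul_def, map_ofNat]; ring
  rw [e1, e2, smul_pow, smul_pow, map_smul, map_smul, smul_eq_mul, smul_eq_mul] at h
  have h4 : (2:ℝ) ^ (2 * a) = 4 ^ a := by rw [pow_mul]; norm_num
  rw [h4] at h
  have hu : 0 ≤ L (u ^ (2 * a)) := by rw [two_mul, pow_add]; exact hL _
  have hv : 0 ≤ L (v ^ (2 * a)) := by rw [two_mul, pow_add]; exact hL _
  have : 0 ≤ (4:ℝ) ^ a * (L (u ^ (2 * a)) + L (v ^ (2 * a))) := by positivity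
  rw [mul_add] at *
  linarith

def Good (L : R →ₗ[ℝ] ℝ) (u : R) : Prop :=
  ∃ c : ℝ, 0 ≤ c ∧ ∀ a : ℕ, L (u ^ (2 * a)) ≤ c ^ (a + 1) * (a.factorial : ℝ)

lemma Good.add (hL : ∀ q, 0 ≤ L (q * q)) {u v : R} (hu : Good L u) (hv : Good L v) :
    Good L (u + v) := by
  obtain ⟨c, hc, h⟩ := hu
  obtain ⟨d, hd, h'⟩ := hv
  refine ⟨4 * (c + d), by positivity, fun a => (pow_add_le hL u v a).trans ?_⟩
  have h1 := add_le_add (h a) (h' a)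
  have h2 : c ^ (a + 1) + d ^ (a + 1) ≤ (c + d) ^ (a + 1) :=
    pow_add_pow_le hc hd (by omega)
  have h3 : (4:ℝ) ^ a ≤ 4 ^ (a + 1) := pow_le_pow_right₀ (by norm_num) (by omega)
  calc 4 ^ a * (L (u ^ (2 * a)) + L (v ^ (2 * a)))
      ≤ 4 ^ a * ((c ^ (a + 1) + d ^ (a + 1)) * (a.factorial : ℝ)) := by
        rw [add_mul]; gcongr
    _ ≤ 4 ^ (a + 1) * ((c + d) ^ (a + 1) * (a.factorial : ℝ)) := by gcongr
    _ = _ := by rw [mul_pow]; ring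

lemma Good.smul (hL : ∀ q, 0 ≤ L (q * q)) (t : ℝ) {u : R} (hu : Good L u) : Good L (t • u) := by
  obtain ⟨c, hc, h⟩ := hu
  refine ⟨(t ^ 2 + 1) * c, by positivity, fun a => ?_⟩
  rw [smul_pow, map_smul, smul_eq_mul, mul_pow, pow_mul]
  have h3 : (t ^ 2) ^ a ≤ (t ^ 2 + 1) ^ (a + 1) := by
    calc (t ^ 2) ^ a ≤ (t ^ 2 + 1) ^ a := by gcongr; linarith
      _ ≤ _ := pow_le_pow_right₀ (by nlinarith [sq_nonneg t]) (by omega)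
  have hu : 0 ≤ L (u ^ (2 * a)) := by rw [two_mul, pow_add]; exact hL _
  calc (t ^ 2) ^ a * L (u ^ (2 * a)) ≤ (t ^ 2 + 1) ^ (a + 1) * (c ^ (a + 1) * (a.factorial : ℝ)) := by
        gcongr; exact h a
    _ = _ := by ring

lemma Good.zero (hL : ∀ q, 0 ≤ L (q * q)) : Good L (0 : R) := by
  have h1 := hL 1
  rw [mul_one] at h1
  refine ⟨L 1, h1, fun a => ?_⟩
  rcases Nat.eq_zero_or_pos a with rfl | ha
  · simp
  · rw [zero_pow (by omega), map_zero]; positivity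

lemma Good.sub (hL : ∀ q, 0 ≤ L (q * q)) {u v : R} (hu : Good L u) (hv : Good L v) :
    Good L (u - v) := by
  have := hu.add hL (hv.smul hL (-1))
  simpa [sub_eq_add_neg] using this

open PowerSeries in
def NN (hL : ∀ q, 0 ≤ L (q * q)) : Submodule ℝ (PowerSeries R) where
  carrier := {F | ∀ ρ : ℝ, 0 < ρ → ∃ K : ℝ, 0 ≤ K ∧ ∀ m, ρ ^ m * L (coeff m F * coeff m F) ≤ K}
  zero_mem' := fun ρ _ => ⟨0, le_rfl, by simp⟩
  add_mem' := by
    intro F G hF hG ρ hρ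
    obtain ⟨K, hK, h⟩ := hF ρ hρ
    obtain ⟨K', hK', h'⟩ := hG ρ hρ
    refine ⟨2 * K + 2 * K', by positivity, fun m => ?_⟩
    rw [map_add]
    have := mul_le_mul_of_nonneg_left (sq_add_le hL (coeff m F) (coeff m G)) (pow_nonneg hρ.le m)
    have := h m
    have := h' m
    linarith
  smul_mem' := by
    intro t F hF ρ hρ
    obtain ⟨K, hK, h⟩ := hF ρ hρ
    refine ⟨t ^ 2 * K, by positivity, fun m => ?_⟩
    have e : coeff m (t • F) = t • coeff m F := by
      rfl
    rw [e, smul_mul_smul_comm, map_smul, smul_eq_mul]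
    have := mul_le_mul_of_nonneg_left (h m) (sq_nonneg t)
    linarith

/-- the series of `Re (z * exp (i X u))` -/
noncomputable def ee (u : R) (z : ℂ) : PowerSeries R :=
  PowerSeries.mk fun m => ((z * Complex.I ^ m).re / (m.factorial : ℝ)) • u ^ m

lemma ee_add (u : R) (z w : ℂ) : ee u (z + w) = ee u z + ee u w := by
  ext m
  simp only [ee, PowerSeries.coeff_mk, map_add]
  rw [← add_smul, add_mul, Complex.add_re, add_div]

lemma ee_zero_one : ee (0 : R) 1 = 1 := by
  ext m
  rcases Nat.eq_zero_or_pos m with rfl | hm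
  · simp [ee]
  · simp [ee, PowerSeries.coeff_one, hm.ne']

lemma ee_mul (u v : R) (z w : ℂ) :
    ee u z * ee v w = (1 / 2 : ℝ) • (ee (u + v) (z * w) + ee (u - v) (z * (starRingEnd ℂ) w)) := by
  ext m
  have e : ∀ F : PowerSeries R, PowerSeries.coeff m ((1 / 2 : ℝ) • F) =
      (1 / 2 : ℝ) • PowerSeries.coeff m F := fun F => rfl
  rw [e, PowerSeries.coeff_mul, map_add]
  simp only [ee, PowerSeries.coeff_mk]
  rw [sub_eq_add_neg, (Commute.all u v).add_pow', (Commute.all u (-v)).add_pow', Finset.smul_sum,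
    Finset.smul_sum, ← Finset.sum_add_distrib, Finset.smul_sum]
  refine Finset.sum_congr rfl fun p hp => ?_
  obtain ⟨a, b⟩ := p
  rw [Finset.HasAntidiagonal.mem_antidiagonal] at hp
  simp only at hp ⊢
  subst hp
  rw [neg_pow v, smul_mul_smul_comm]
  have hneg : ((-1 : R)) ^ b = algebraMap ℝ R ((-1) ^ b) := by simp
  rw [hneg]
  simp only [nsmul_eq_mul]
  simp only [Algebra.smul_def]
  have hc : (((a + b).choose a : ℕ) : R) = algebraMap ℝ R ((a + b).choose a) := by simp
  rw [hc]
  have hre : (z * Complex.I ^ a).re * (w * Complex.I ^ b).re =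
      1 / 2 * ((z * w * Complex.I ^ (a + b)).re +
        (z * (starRingEnd ℂ) w * Complex.I ^ (a + b)).re * (-1) ^ b) := by
    have h1 : (starRingEnd ℂ) (w * Complex.I ^ b) = (starRingEnd ℂ) w * Complex.I ^ b * (((-1 : ℝ) ^ b : ℝ) : ℂ) := by
      rw [map_mul, map_pow, Complex.conj_I, neg_pow]; push_cast; ring
    have h2 : (z * (starRingEnd ℂ) w * Complex.I ^ (a + b)).re * (-1) ^ b =
       ((z * Complex.I ^ a) * (starRingEnd ℂ) (w * Complex.I ^ b)).re := by
      rw [h1, ← Complex.re_mul_ofReal]; congr 1; ring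
    have h3 : z * w * Complex.I ^ (a + b) = (z * Complex.I ^ a) * (w * Complex.I ^ b) := by ring
    rw [h2, h3]
    simp only [Complex.mul_re, Complex.conj_re, Complex.conj_im]
    ring
  have hch : ((a + b).choose a : ℝ) = (a + b).factorial / (a.factorial * b.factorial) := by
    rw [Nat.cast_add_choose]
  have hr : (z * Complex.I ^ a).re / (a.factorial : ℝ) * ((w * Complex.I ^ b).re / (b.factorial : ℝ)) =
      1 / 2 * ((z * w * Complex.I ^ (a + b)).re / ((a + b).factorial : ℝ) * ((a + b).choose a : ℝ) +
      (z * (starRingEnd ℂ) w * Complex.I ^ (a + b)).re / ((a + b).factorial : ℝ) *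
        ((a + b).choose a : ℝ) * (-1) ^ b) := by
    rw [div_mul_div_comm, hre, hch]
    have := Nat.factorial_ne_zero (a + b)
    field_simp
  rw [hr]
  simp only [map_mul, map_add]
  ring

end abs
end SOSA

namespace SOSA
section abs
variable {R : Type*} [CommRing R] [Algebra ℝ R] {L : R →ₗ[ℝ] ℝ}

lemma ee_mem_NN (hL : ∀ q, 0 ≤ L (q * q)) {u : R} (hu : Good L u) (z : ℂ) : ee u z ∈ NN hL := by
  obtain ⟨c, hc, h⟩ := hu
  intro ρ hρ
  refine ⟨‖z‖ ^ 2 * (c * Real.exp (ρ * c)), by positivity, fun m => ?_⟩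
  simp only [ee, PowerSeries.coeff_mk]
  rw [smul_mul_smul_comm, map_smul, smul_eq_mul, ← pow_add, ← two_mul]
  have h1 : (z * Complex.I ^ m).re / (m.factorial : ℝ) * ((z * Complex.I ^ m).re / (m.factorial : ℝ))
      ≤ ‖z‖ ^ 2 / (m.factorial : ℝ) ^ 2 := by
    rw [div_mul_div_comm, ← sq, ← sq]
    refine div_le_div_of_nonneg_right ?_ (by positivity)
    rw [← sq_abs]
    gcongr
    refine (Complex.abs_re_le_norm _).trans ?_
    simp
  have hu : 0 ≤ L (u ^ (2 * m)) := by rw [two_mul, pow_add]; exact hL _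
  have hf : (0:ℝ) < m.factorial := by positivity
  have h2 : (ρ * c) ^ m / (m.factorial : ℝ) ≤ Real.exp (ρ * c) :=
    Real.pow_div_factorial_le_exp _ (by positivity) m
  calc ρ ^ m * ((z * Complex.I ^ m).re / (m.factorial : ℝ) * ((z * Complex.I ^ m).re / (m.factorial : ℝ)) * L (u ^ (2 * m)))
      ≤ ρ ^ m * (‖z‖ ^ 2 / (m.factorial : ℝ) ^ 2 * (c ^ (m + 1) * (m.factorial : ℝ))) := by
        gcongr
        exact h m
    _ = ‖z‖ ^ 2 * (c * ((ρ * c) ^ m / (m.factorial : ℝ))) := by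
        field_simp
        ring
    _ ≤ _ := by gcongr

/-- the algebra of trigonometric polynomials -/
noncomputable def SS (hL : ∀ q, 0 ≤ L (q * q)) : Subalgebra ℝ (PowerSeries R) :=
  (Submodule.span ℝ {F : PowerSeries R | ∃ u z, Good L u ∧ F = ee u z}).toSubalgebra
    (Submodule.subset_span ⟨0, 1, Good.zero hL, ee_zero_one.symm⟩)
    (by
      intro F G hF hG
      induction hF using Submodule.span_induction with
      | zero => rw [zero_mul]; exact Submodule.zero_mem _
      | add x y _ _ hx hy => rw [add_mul]; exact Submodule.add_mem _ hx hy
      | smul t x _ hx => rw [smul_mul_assoc]; exact Submodule.smul_mem _ _ hx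
      | mem x hx =>
        obtain ⟨u, z, hu, rfl⟩ := hx
        induction hG using Submodule.span_induction with
        | zero => rw [mul_zero]; exact Submodule.zero_mem _
        | add x y _ _ hx hy => rw [mul_add]; exact Submodule.add_mem _ hx hy
        | smul t x _ hx => rw [mul_smul_comm]; exact Submodule.smul_mem _ _ hx
        | mem x hx =>
          obtain ⟨v, w, hv, rfl⟩ := hx
          rw [ee_mul]
          exact Submodule.smul_mem _ _ (Submodule.add_mem _
            (Submodule.subset_span ⟨_, _, hu.add hL hv, rfl⟩)
            (Submodule.subset_span ⟨_, _, hu.sub hL hv, rfl⟩)))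

lemma ee_mem_SS (hL : ∀ q, 0 ≤ L (q * q)) {u : R} (hu : Good L u) (z : ℂ) : ee u z ∈ SS hL :=
  Submodule.subset_span ⟨u, z, hu, rfl⟩

lemma SS_le_NN (hL : ∀ q, 0 ≤ L (q * q)) {F : PowerSeries R} (hF : F ∈ SS hL) : F ∈ NN hL := by
  have : Submodule.span ℝ {F : PowerSeries R | ∃ u z, Good L u ∧ F = ee u z} ≤ NN hL := by
    rw [Submodule.span_le]
    rintro _ ⟨u, z, hu, rfl⟩
    exact ee_mem_NN hL hu z
  exact this hF

/-- evaluation of the functional on series at `X = δ` -/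
noncomputable def Lam (L : R →ₗ[ℝ] ℝ) (δ : ℝ) (F : PowerSeries R) : ℝ :=
  ∑' m, δ ^ m * L (PowerSeries.coeff m F)

lemma NN_bound (hL : ∀ q, 0 ≤ L (q * q)) {F : PowerSeries R} (hF : F ∈ NN hL) (τ : ℝ) (hτ : 0 < τ) :
    ∃ K, 0 ≤ K ∧ ∀ j k, τ ^ (j + k) * |L (PowerSeries.coeff j F * PowerSeries.coeff k F)| ≤ K := by
  obtain ⟨K, hK, h⟩ := hF (τ ^ 2) (by positivity)
  refine ⟨K, hK, fun j k => ?_⟩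
  have h1 := cs hL (PowerSeries.coeff j F) (PowerSeries.coeff k F)
  refine abs_le_of_sq_le_sq' ?_ hK |>.2
  rw [mul_pow, sq_abs]
  calc (τ ^ (j + k)) ^ 2 * L (PowerSeries.coeff j F * PowerSeries.coeff k F) ^ 2
      ≤ (τ ^ (j + k)) ^ 2 * (L (PowerSeries.coeff j F * PowerSeries.coeff j F) *
        L (PowerSeries.coeff k F * PowerSeries.coeff k F)) := by gcongr
    _ = ((τ ^ 2) ^ j * L (PowerSeries.coeff j F * PowerSeries.coeff j F)) *
        ((τ ^ 2) ^ k * L (PowerSeries.coeff k F * PowerSeries.coeff k F)) := by ring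
    _ ≤ K * K := by
        gcongr
        · exact mul_nonneg (by positivity) (hL _)
        · exact h j
        · exact h k
    _ = K ^ 2 := by ring

lemma NN_bound1 (hL : ∀ q, 0 ≤ L (q * q)) {F : PowerSeries R} (hF : F ∈ NN hL) (τ : ℝ) (hτ : 0 < τ) :
    ∃ K, 0 ≤ K ∧ ∀ j, τ ^ j * |L (PowerSeries.coeff j F)| ≤ K := by
  obtain ⟨K, hK, h⟩ := hF (τ ^ 2) (by positivity)
  have h0 : 0 ≤ L 1 := by have := hL 1; rwa [mul_one] at this
  refine ⟨L 1 + K, by positivity, fun j => ?_⟩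
  have h1 := cs hL 1 (PowerSeries.coeff j F)
  rw [one_mul, one_mul] at h1
  refine abs_le_of_sq_le_sq' ?_ (by positivity) |>.2
  rw [mul_pow, sq_abs]
  have h2 := h j
  have h3 : (τ ^ j) ^ 2 * L (PowerSeries.coeff j F) ^ 2 ≤ L 1 * K := by
    calc (τ ^ j) ^ 2 * L (PowerSeries.coeff j F) ^ 2 ≤ (τ ^ j) ^ 2 * (L 1 * L (PowerSeries.coeff j F * PowerSeries.coeff j F)) := by gcongr
      _ = L 1 * ((τ ^ 2) ^ j * L (PowerSeries.coeff j F * PowerSeries.coeff j F)) := by ring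
      _ ≤ L 1 * K := by gcongr
  nlinarith

lemma Lam_summable (hL : ∀ q, 0 ≤ L (q * q)) {F : PowerSeries R} (hF : F ∈ NN hL) (δ : ℝ) (hδ : 0 < δ) :
    Summable fun m => δ ^ m * L (PowerSeries.coeff m F) := by
  obtain ⟨K, hK, h⟩ := NN_bound1 hL hF (2 * δ) (by positivity)
  refine Summable.of_norm_bounded (g := fun m => K * (1 / 2 : ℝ) ^ m)
    (summable_geometric_two.mul_left K) fun m => ?_
  have := h m
  rw [norm_mul, Real.norm_eq_abs, Real.norm_eq_abs, abs_of_nonneg (by positivity : 0 ≤ δ ^ m)]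
  rw [mul_pow, mul_assoc] at this
  rw [one_div, inv_pow, ← div_eq_mul_inv, le_div_iff₀ (by positivity)]
  linarith

lemma Lam_add (hL : ∀ q, 0 ≤ L (q * q)) {F G : PowerSeries R} (hF : F ∈ NN hL) (hG : G ∈ NN hL)
    (δ : ℝ) (hδ : 0 < δ) : Lam L δ (F + G) = Lam L δ F + Lam L δ G := by
  unfold Lam
  rw [← (Lam_summable hL hF δ hδ).tsum_add (Lam_summable hL hG δ hδ)]
  simp [mul_add]

lemma Lam_smul (t : ℝ) (F : PowerSeries R) (δ : ℝ) : Lam L δ (t • F) = t * Lam L δ F := by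
  unfold Lam
  rw [← tsum_mul_left]
  refine tsum_congr fun m => ?_
  have e : PowerSeries.coeff m (t • F) = t • PowerSeries.coeff m F := rfl
  rw [e, map_smul, smul_eq_mul]; ring

lemma Lam_sq_nonneg (hL : ∀ q, 0 ≤ L (q * q)) {F : PowerSeries R} (hF : F ∈ NN hL)
    (δ : ℝ) (hδ : 0 < δ) : 0 ≤ Lam L δ (F * F) := by
  obtain ⟨K, hK, h⟩ := NN_bound hL hF (2 * δ) (by positivity)
  set a : ℕ × ℕ → ℝ := fun p => δ ^ (p.1 + p.2) * L (PowerSeries.coeff p.1 F * PowerSeries.coeff p.2 F) with ha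
  have hs : Summable a := by
    have hg : Summable fun p : ℕ × ℕ => (1 / 2 : ℝ) ^ p.1 * (1 / 2 : ℝ) ^ p.2 :=
      summable_geometric_two.mul_of_nonneg summable_geometric_two
        (fun _ => by positivity) (fun _ => by positivity)
    refine Summable.of_norm_bounded (g := fun p => K * ((1 / 2 : ℝ) ^ p.1 * (1 / 2 : ℝ) ^ p.2))
      (hg.mul_left K) fun p => ?_
    have := h p.1 p.2
    rw [ha, norm_mul, Real.norm_eq_abs, Real.norm_eq_abs, abs_of_nonneg (by positivity : 0 ≤ δ ^ _)]
    rw [mul_pow, mul_assoc] at this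
    rw [← pow_add, one_div, inv_pow, ← div_eq_mul_inv, le_div_iff₀ (by positivity)]
    linarith
  have hpos : 0 ≤ ∑' p, a p := by
    have ht : Tendsto (fun M : ℕ => Finset.range M ×ˢ Finset.range M) atTop atTop := by
      refine tendsto_atTop_finset_of_monotone ?_ ?_
      · intro M N hMN
        exact Finset.product_subset_product (Finset.range_mono hMN) (Finset.range_mono hMN)
      · intro p
        refine ⟨p.1 + p.2 + 1, ?_⟩
        simp only [Finset.mem_product, Finset.mem_range]
        omega
    refine ge_of_tendsto' (hs.hasSum.comp ht) fun M => ?_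
    have e : ∑ p ∈ Finset.range M ×ˢ Finset.range M, a p =
        L ((∑ j ∈ Finset.range M, δ ^ j • PowerSeries.coeff j F) *
          (∑ j ∈ Finset.range M, δ ^ j • PowerSeries.coeff j F)) := by
      rw [Finset.sum_mul_sum, Finset.sum_product, map_sum]
      refine Finset.sum_congr rfl fun j _ => ?_
      rw [map_sum]
      refine Finset.sum_congr rfl fun k _ => ?_
      rw [smul_mul_smul_comm, map_smul, smul_eq_mul, ha]
      simp only [pow_add]
    simp only [Function.comp]
    rw [e]
    exact hL _
  have e : Lam L δ (F * F) = ∑' p, a p := by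
    have hs' : Summable fun x : Σ m : ℕ, Finset.HasAntidiagonal.antidiagonal m => a (x.2 : ℕ × ℕ) :=
      Finset.HasAntidiagonal.sigmaAntidiagonalEquivProd.summable_iff (f := a) |>.2 hs
    rw [← Finset.HasAntidiagonal.sigmaAntidiagonalEquivProd.tsum_eq a]
    change _ = ∑' x : Σ m : ℕ, Finset.HasAntidiagonal.antidiagonal m, a (x.2 : ℕ × ℕ)
    rw [hs'.tsum_sigma' (fun m => (hasSum_fintype _).summable)]
    refine tsum_congr fun m => ?_
    rw [tsum_fintype, PowerSeries.coeff_mul, map_sum, Finset.mul_sum]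
    rw [← Finset.sum_coe_sort]
    refine Finset.sum_congr rfl fun p _ => ?_
    have hp := Finset.HasAntidiagonal.mem_antidiagonal.1 p.2
    rw [ha]
    simp only [hp]
  rw [e]; exact hpos

/-- the functional on the algebra of trigonometric polynomials -/
noncomputable def LamS (hL : ∀ q, 0 ≤ L (q * q)) (δ : ℝ) (hδ : 0 < δ) : (SS hL) →ₗ[ℝ] ℝ where
  toFun F := Lam L δ F
  map_add' F G := Lam_add hL (SS_le_NN hL F.2) (SS_le_NN hL G.2) δ hδ
  map_smul' t _ := Lam_smul t _ δ

lemma NN_of_shift (hL : ∀ q, 0 ≤ L (q * q)) {G : PowerSeries R} (d : ℕ)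
    (hG : PowerSeries.X ^ d * G ∈ NN hL) : G ∈ NN hL := by
  intro ρ hρ
  obtain ⟨K, hK, h⟩ := hG ρ hρ
  refine ⟨K / ρ ^ d, by positivity, fun m => ?_⟩
  have := h (m + d)
  rw [PowerSeries.coeff_X_pow_mul, pow_add] at this
  rw [le_div_iff₀ (by positivity)]
  linarith

lemma Lam_shift (hL : ∀ q, 0 ≤ L (q * q)) {G : PowerSeries R} (d : ℕ)
    (hG : PowerSeries.X ^ d * G ∈ NN hL) (δ : ℝ) (hδ : 0 < δ) :
    Lam L δ (PowerSeries.X ^ d * G) = δ ^ d * Lam L δ G := by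
  unfold Lam
  rw [← (Lam_summable hL hG δ hδ).sum_add_tsum_nat_add d, Finset.sum_eq_zero, zero_add,
    ← tsum_mul_left]
  · refine tsum_congr fun m => ?_
    rw [PowerSeries.coeff_X_pow_mul]; ring
  · intro j hj
    rw [PowerSeries.coeff_X_pow_mul', if_neg (by simpa using hj)]; simp

lemma Lam_tendsto (hL : ∀ q, 0 ≤ L (q * q)) {G : PowerSeries R} (hG : G ∈ NN hL) :
    Tendsto (fun δ : ℝ => Lam L δ G) (𝓝[>] 0) (𝓝 (L (PowerSeries.coeff 0 G))) := by
  have h1 := Lam_summable hL hG 1 one_pos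
  simp only [one_pow, one_mul] at h1
  have h0 : L (PowerSeries.coeff 0 G) = ∑' m, (0:ℝ) ^ m * L (PowerSeries.coeff m G) := by
    rw [tsum_eq_single 0]
    · simp
    · intro m hm; simp [hm]
  rw [h0]
  unfold Lam
  refine tendsto_tsum_of_dominated_convergence (bound := fun m => |L (PowerSeries.coeff m G)|) h1.abs ?_ ?_
  · intro m
    refine Tendsto.mul_const _ ?_
    have : Continuous fun x : ℝ => x ^ m := by fun_prop
    exact (this.tendsto 0).mono_left nhdsWithin_le_nhds
  · filter_upwards [Ioo_mem_nhdsGT (zero_lt_one' ℝ)] with δ hδ m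
    rw [norm_mul, Real.norm_eq_abs, Real.norm_eq_abs, abs_of_nonneg (pow_nonneg hδ.1.le m)]
    exact mul_le_of_le_one_left (abs_nonneg _) (pow_le_one₀ hδ.1.le hδ.2.le)

end abs
end SOSA

namespace SOSA

lemma bern_id {A : Type*} [CommRing A] [Algebra ℝ A] (y : A) (N j : ℕ) (hj : j ≤ N) :
    y ^ j = ∑ k ∈ Finset.range (N + 1), (((k.choose j : ℝ) / (N.choose j : ℝ)) * (N.choose k : ℝ)) •
      (y ^ k * (1 - y) ^ (N - k)) := by
  obtain ⟨M, rfl⟩ := Nat.exists_eq_add_of_le hj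
  rw [add_assoc, Finset.sum_range_add, Finset.sum_eq_zero, zero_add]
  · have h1 : y ^ j = y ^ j * (y + (1 - y)) ^ M := by simp
    conv_lhs => rw [h1, add_pow, Finset.mul_sum]
    refine Finset.sum_congr rfl fun i hi => ?_
    have hi' : i ≤ M := by simpa [Nat.lt_succ_iff] using hi
    have h2 : ((j + i).choose j : ℝ) / ((j + M).choose j : ℝ) * ((j + M).choose (j + i) : ℝ) = (M.choose i : ℝ) := by
      have := Nat.choose_mul (n := j + M) (k := j + i) (s := j) (by omega)
      simp only [Nat.add_sub_cancel_left] at this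
      have h3 : (0:ℝ) < ((j + M).choose j : ℝ) := by exact_mod_cast Nat.choose_pos (by omega)
      rw [div_mul_eq_mul_div, div_eq_iff h3.ne']
      have : (((j + M).choose (j + i) : ℕ) : ℝ) * ((j + i).choose j : ℕ) = ((j + M).choose j : ℕ) * (M.choose i : ℕ) := by
        exact_mod_cast this
      linarith
    rw [h2, Algebra.smul_def, map_natCast, pow_add, Nat.add_sub_add_left]
    ring
  · intro k hk
    rw [Nat.choose_eq_zero_of_lt (by simpa using hk)]
    simp

lemma w_le_one (N j k : ℕ) (hk : k ≤ N) : (k.choose j : ℝ) / (N.choose j : ℝ) ≤ 1 := by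
  apply div_le_one_of_le₀ _ (by positivity)
  exact_mod_cast Nat.choose_le_choose j hk

lemma w_est (N k : ℕ) (hk : k ≤ N) (hN : 0 < N) : ∀ j : ℕ, j ≤ N →
    |(k.choose j : ℝ) / (N.choose j : ℝ) - ((k : ℝ) / N) ^ j| ≤ (j : ℝ) ^ 2 / N := by
  intro j
  have hN' : (0:ℝ) < N := by exact_mod_cast hN
  have ht0 : 0 ≤ (k : ℝ) / N := by positivity
  have ht1 : (k : ℝ) / N ≤ 1 := by
    apply div_le_one_of_le₀ _ hN'.le
    exact_mod_cast hk
  induction j with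
  | zero => intro _; simp
  | succ j ih =>
    intro hj
    have ih := ih (by omega)
    set w : ℝ := (k.choose j : ℝ) / (N.choose j : ℝ) with hw
    have hw0 : 0 ≤ w := by positivity
    have hw1 : w ≤ 1 := w_le_one N j k hk
    have hNj : (0:ℝ) < (N:ℝ) - j := by
      have : (j:ℝ) + 1 ≤ N := by exact_mod_cast hj
      linarith
    have hrec : (k.choose (j + 1) : ℝ) / (N.choose (j + 1) : ℝ) = w * (((k:ℝ) - j) / ((N:ℝ) - j)) := by
      have e1 := Nat.choose_succ_right_eq k j
      have e2 := Nat.choose_succ_right_eq N j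
      have p1 : (0:ℝ) < (N.choose j : ℝ) := by exact_mod_cast Nat.choose_pos (by omega)
      have p2 : (0:ℝ) < (N.choose (j + 1) : ℝ) := by exact_mod_cast Nat.choose_pos (by omega)
      have e2' : (N.choose (j + 1) : ℝ) * (j + 1) = N.choose j * ((N:ℝ) - j) := by
        rw [← Nat.cast_sub (by omega)]
        exact_mod_cast e2
      have e1' : (k.choose (j + 1) : ℝ) * (j + 1) = k.choose j * ((k:ℝ) - j) := by
        rcases le_or_gt j k with h | h
        · rw [← Nat.cast_sub h]
          exact_mod_cast e1
        · rw [Nat.choose_eq_zero_of_lt h, Nat.choose_eq_zero_of_lt (by omega)]; simp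
      rw [hw, div_mul_div_comm, ← e1', ← e2']
      field_simp
    rw [hrec]
    have hfac : |w * (((k:ℝ) - j) / ((N:ℝ) - j) - (k:ℝ) / N)| ≤ j / N := by
      rcases le_or_gt j k with h | h
      · have hkN : (k:ℝ) ≤ N := by exact_mod_cast hk
        have hjk : (j:ℝ) ≤ k := by exact_mod_cast h
        have e : ((k:ℝ) - j) / ((N:ℝ) - j) - (k:ℝ) / N = - ((j / N) * ((N - k) / (N - j))) := by
          field_simp
          ring
        rw [e, abs_mul, abs_neg, abs_of_nonneg hw0, abs_of_nonneg (mul_nonneg (by positivity) (div_nonneg (by linarith) hNj.le))]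
        have h1 : ((N:ℝ) - k) / (N - j) ≤ 1 := div_le_one_of_le₀ (by linarith) hNj.le
        have h2 : 0 ≤ ((N:ℝ) - k) / (N - j) := div_nonneg (by linarith) hNj.le
        have h3 : (0:ℝ) ≤ j / N := by positivity
        calc w * (j / N * (((N:ℝ) - k) / (N - j))) ≤ 1 * (j / N * 1) := by gcongr
          _ = _ := by ring
      · have : w = 0 := by rw [hw, Nat.choose_eq_zero_of_lt h]; simp
        rw [this]; simp; positivity
    have e : w * (((k:ℝ) - j) / ((N:ℝ) - j)) - ((k:ℝ) / N) ^ (j + 1) =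
        w * (((k:ℝ) - j) / ((N:ℝ) - j) - (k:ℝ) / N) + (w - ((k:ℝ) / N) ^ j) * ((k:ℝ) / N) := by ring
    rw [e]
    refine (abs_add_le _ _).trans ?_
    have h5 : |(w - ((k:ℝ) / N) ^ j) * ((k:ℝ) / N)| ≤ (j:ℝ) ^ 2 / N := by
      rw [abs_mul, abs_of_nonneg ht0]
      calc _ ≤ (j:ℝ) ^ 2 / N * 1 := by gcongr
        _ = _ := by ring
    have h6 : (j:ℝ) / N + (j:ℝ) ^ 2 / N ≤ ((j + 1 : ℕ) : ℝ) ^ 2 / N := by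
      rw [← add_div]
      gcongr
      push_cast
      nlinarith [(Nat.cast_nonneg j : (0:ℝ) ≤ j)]
    linarith

lemma prod_est {ι : Type*} (s : Finset ι) (a b : ι → ℝ) (ha0 : ∀ i, 0 ≤ a i) (ha1 : ∀ i, a i ≤ 1)
    (hb0 : ∀ i, 0 ≤ b i) (hb1 : ∀ i, b i ≤ 1) :
    |∏ i ∈ s, a i - ∏ i ∈ s, b i| ≤ ∑ i ∈ s, |a i - b i| := by
  classical
  induction s using Finset.induction_on with
  | empty => simp
  | insert i s hi ih =>
    rw [Finset.prod_insert hi, Finset.prod_insert hi, Finset.sum_insert hi]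
    have e : a i * ∏ i ∈ s, a i - b i * ∏ i ∈ s, b i =
      (a i - b i) * ∏ i ∈ s, a i + b i * (∏ i ∈ s, a i - ∏ i ∈ s, b i) := by ring
    rw [e]
    refine (abs_add_le _ _).trans (add_le_add ?_ ?_)
    · rw [abs_mul]
      refine mul_le_of_le_one_right (abs_nonneg _) ?_
      rw [abs_of_nonneg (Finset.prod_nonneg fun i _ => ha0 i)]
      exact Finset.prod_le_one (fun i _ => ha0 i) (fun i _ => ha1 i)
    · rw [abs_mul, abs_of_nonneg (hb0 i)]
      exact (mul_le_of_le_one_left (abs_nonneg _) (hb1 i)).trans ih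

lemma bern_pos {A : Type*} [CommRing A] [Algebra ℝ A] (Λ : A →ₗ[ℝ] ℝ) (hΛ : ∀ q, 0 ≤ Λ (q * q))
    {n : ℕ} (a b : Fin n → A) (hab : ∀ i, a i * a i + b i * b i = 1)
    (Q : MvPolynomial (Fin n) ℝ) (hQ : ∀ t : Fin n → ℝ, (∀ i, 0 ≤ t i ∧ t i ≤ 1) → 0 ≤ eval t Q) :
    0 ≤ Λ (aeval (fun i => a i * a i) Q) := by
  set y : Fin n → A := fun i => a i * a i with hy
  have hy' : ∀ i, 1 - y i = b i * b i := fun i => by rw [← hab i, hy]; ring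
  set c : ℝ := ∑ α ∈ Q.support, |coeff α Q| * ∑ i, (α i : ℝ) ^ 2 with hc
  have main : ∀ N : ℕ, 0 < N → (∀ α ∈ Q.support, ∀ i, α i ≤ N) →
      -(c / N * Λ 1) ≤ Λ (aeval y Q) := by
    intro N hN hαN
    set P := Fintype.piFinset (fun _ : Fin n => Finset.range (N + 1)) with hP
    set B : (Fin n → ℕ) → A := fun k => ∏ i, (N.choose (k i) : ℝ) • (y i ^ k i * (1 - y i) ^ (N - k i)) with hB
    set W : (Fin n →₀ ℕ) → (Fin n → ℕ) → ℝ := fun α k => ∏ i, ((k i).choose (α i) : ℝ) / (N.choose (α i) : ℝ) with hW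
    have hBpos : ∀ k, 0 ≤ Λ (B k) := by
      intro k
      have : B k = (∏ i, (N.choose (k i) : ℝ)) •
          ((∏ i, (a i ^ k i * b i ^ (N - k i))) * (∏ i, (a i ^ k i * b i ^ (N - k i)))) := by
        rw [hB]
        simp only [hy', Algebra.smul_def, map_prod, ← Finset.prod_mul_distrib]
        refine Finset.prod_congr rfl fun i _ => ?_
        simp only [hy, mul_pow]; ring
      rw [this, map_smul, smul_eq_mul]
      exact mul_nonneg (Finset.prod_nonneg fun i _ => by positivity) (hΛ _)
    have hmon : ∀ α : Fin n →₀ ℕ, (∀ i, α i ≤ N) → ∏ i, y i ^ α i = ∑ k ∈ P, W α k • B k := by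
      intro α hα
      rw [Finset.prod_congr rfl fun i _ => bern_id (y i) N (α i) (hα i), Finset.prod_univ_sum]
      refine Finset.sum_congr rfl fun k _ => ?_
      simp only [hW, hB, Algebra.smul_def, map_prod, ← Finset.prod_mul_distrib]
      refine Finset.prod_congr rfl fun i _ => ?_
      rw [map_mul]; ring
    have hone : Λ 1 = ∑ k ∈ P, Λ (B k) := by
      have := hmon 0 (by simp)
      simp only [hW, Finsupp.coe_zero, Pi.zero_apply, pow_zero, Finset.prod_const_one,
        Nat.choose_zero_right, Nat.cast_one, div_one, one_smul] at this
      rw [this, map_sum]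
    have hQe : Λ (aeval y Q) = ∑ k ∈ P, (∑ α ∈ Q.support, coeff α Q * W α k) * Λ (B k) := by
      rw [aeval_def, eval₂_eq', map_sum]
      simp only [Finset.sum_mul]
      rw [Finset.sum_comm]
      refine Finset.sum_congr rfl fun α hα => ?_
      rw [hmon α (hαN α hα), ← Algebra.smul_def, map_smul, map_sum, smul_eq_mul, Finset.mul_sum]
      refine Finset.sum_congr rfl fun k _ => ?_
      rw [map_smul, smul_eq_mul]; ring
    rw [hQe, hone, Finset.mul_sum, ← Finset.sum_neg_distrib]
    refine Finset.sum_le_sum fun k hk => ?_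
    rw [← neg_mul]
    refine mul_le_mul_of_nonneg_right ?_ (hBpos k)
    have hkN : ∀ i, k i ≤ N := fun i => by
      have := Fintype.mem_piFinset.1 hk i
      simpa [Nat.lt_succ_iff] using this
    have hN' : (0:ℝ) < N := by exact_mod_cast hN
    have ht : ∀ i, 0 ≤ (k i : ℝ) / N ∧ (k i : ℝ) / N ≤ 1 := fun i =>
      ⟨by positivity, div_le_one_of_le₀ (by exact_mod_cast hkN i) hN'.le⟩
    have h0 := hQ (fun i => (k i : ℝ) / N) ht
    rw [eval_eq'] at h0
    have hd : |∑ α ∈ Q.support, coeff α Q * W α k - ∑ α ∈ Q.support, coeff α Q * ∏ i, ((k i : ℝ) / N) ^ α i|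
        ≤ c / N := by
      rw [← Finset.sum_sub_distrib, hc, Finset.sum_div]
      refine (Finset.abs_sum_le_sum_abs _ _).trans (Finset.sum_le_sum fun α hα => ?_)
      rw [← mul_sub, abs_mul, mul_div_assoc]
      refine mul_le_mul_of_nonneg_left ?_ (abs_nonneg _)
      refine (prod_est _ _ _ (fun i => by positivity) (fun i => w_le_one N _ _ (hkN i))
        (fun i => pow_nonneg (ht i).1 _) (fun i => pow_le_one₀ (ht i).1 (ht i).2)).trans ?_
      rw [Finset.sum_div]
      exact Finset.sum_le_sum fun i _ => w_est N (k i) (hkN i) hN (α i) (hαN α hα i)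
    have := (abs_le.1 hd).1
    linarith
  have hlim : Tendsto (fun N : ℕ => -(c / (N:ℝ) * Λ 1)) atTop (𝓝 (-(0 * Λ 1))) :=
    ((tendsto_const_div_atTop_nhds_zero_nat c).mul_const _).neg
  rw [zero_mul, neg_zero] at hlim
  refine le_of_tendsto hlim ?_
  filter_upwards [eventually_gt_atTop 0, eventually_ge_atTop Q.totalDegree] with N h1 h2
  refine main N h1 fun α hα i => ?_
  have := le_totalDegree hα
  have h3 : α i ≤ α.sum fun _ e => e := by
    rw [Finsupp.sum_fintype _ _ (fun _ => rfl)]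
    exact Finset.single_le_sum (f := fun i => α i) (fun _ _ => Nat.zero_le _) (Finset.mem_univ i)
  omega

end SOSA

namespace SOSA
section abs
variable {R : Type*} [CommRing R] [Algebra ℝ R] {L : R →ₗ[ℝ] ℝ}

lemma Lam_sum (hL : ∀ q, 0 ≤ L (q * q)) {ι : Type*} (s : Finset ι) (F : ι → PowerSeries R)
    (hF : ∀ i ∈ s, F i ∈ NN hL) (δ : ℝ) (hδ : 0 < δ) :
    Lam L δ (∑ i ∈ s, F i) = ∑ i ∈ s, Lam L δ (F i) := by
  classical
  induction s using Finset.induction_on with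
  | empty => simp [Lam]
  | insert i s hi ih =>
    rw [Finset.sum_insert hi, Finset.sum_insert hi, Lam_add hL (hF i (by simp)) _ δ hδ, ih]
    · exact fun j hj => hF j (Finset.mem_insert_of_mem hj)
    · exact Submodule.sum_mem _ fun j hj => hF j (Finset.mem_insert_of_mem hj)

lemma ee_sq (u : R) (z : ℂ) (hz : z * (starRingEnd ℂ) z = 1) :
    ee ((1 / 2 : ℝ) • u) z * ee ((1 / 2 : ℝ) • u) z = (1 / 2 : ℝ) • (1 + ee u (z * z)) := by
  rw [ee_mul, hz, sub_self, ee_zero_one, ← add_smul, add_comm]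
  norm_num

theorem main_pos (hL : ∀ q, 0 ≤ L (q * q)) {n : ℕ} (x : Fin n → R)
    (hx : ∀ i k, L (x i ^ (2 * k)) ≤ (k.factorial : ℝ)) (p : MvPolynomial (Fin n) ℝ)
    (hp : ∀ t, 0 ≤ eval t p) : 0 ≤ L (aeval x p) := by
  have hgood : ∀ i, Good L (x i) := fun i => ⟨1, zero_le_one, fun a => by simpa using hx i a⟩
  set s : Fin n → PowerSeries R := fun i => ee (x i) (-Complex.I) with hs
  have hsS : ∀ i, s i ∈ SS hL := fun i => ee_mem_SS hL (hgood i) _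
  set σ : Fin n → PowerSeries R := fun i => PowerSeries.mk fun m => PowerSeries.coeff (m + 1) (s i) with hσ
  have hsσ : ∀ i, s i = PowerSeries.X * σ i := by
    intro i
    ext m
    rcases m with _ | m
    · simp [hs, ee]
    · rw [PowerSeries.coeff_succ_X_mul, hσ, PowerSeries.coeff_mk]
  have hσ0 : ∀ i, PowerSeries.constantCoeff (σ i) = x i := by
    intro i
    rw [← PowerSeries.coeff_zero_eq_constantCoeff_apply, hσ, PowerSeries.coeff_mk]
    simp [hs, ee]
  have hprod : ∀ α : Fin n →₀ ℕ, ∏ i, s i ^ α i = PowerSeries.X ^ (∑ i, α i) * ∏ i, σ i ^ α i := by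
    intro α
    simp only [hsσ, mul_pow, Finset.prod_mul_distrib, Finset.prod_pow_eq_pow_sum]
  have hsα : ∀ α : Fin n →₀ ℕ, ∏ i, s i ^ α i ∈ NN hL := fun α =>
    SS_le_NN hL (Subalgebra.prod_mem _ fun i _ => Subalgebra.pow_mem _ (hsS i) _)
  have hσα : ∀ α : Fin n →₀ ℕ, ∏ i, σ i ^ α i ∈ NN hL := fun α =>
    NN_of_shift hL (∑ i, α i) (by rw [← hprod]; exact hsα α)
  have hσp : aeval σ p ∈ NN hL := by
    rw [aeval_def, eval₂_eq']
    refine Submodule.sum_mem _ fun α _ => ?_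
    rw [← Algebra.smul_def]
    exact Submodule.smul_mem _ _ (hσα α)
  have hcoef : PowerSeries.coeff 0 (aeval σ p) = aeval x p := by
    rw [PowerSeries.coeff_zero_eq_constantCoeff_apply, aeval_def, aeval_def, eval₂_eq', eval₂_eq', map_sum]
    refine Finset.sum_congr rfl fun α _ => ?_
    rw [map_mul, map_prod, PowerSeries.algebraMap_apply, PowerSeries.constantCoeff_C]
    simp only [map_pow, hσ0]
  have hlim := Lam_tendsto hL hσp
  rw [hcoef] at hlim
  refine ge_of_tendsto hlim ?_
  filter_upwards [self_mem_nhdsWithin] with δ hδ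
  replace hδ : 0 < δ := hδ
  -- trigonometric step
  set z : ℂ := ((√2 / 2 : ℝ) : ℂ) * (1 - Complex.I) with hz
  have h2 : (((√2 / 2 : ℝ) : ℂ)) * ((√2 / 2 : ℝ) : ℂ) = 1 / 2 := by
    rw [← Complex.ofReal_mul]
    have : √2 / 2 * (√2 / 2) = 1 / 2 := by
      have := Real.mul_self_sqrt (show (0:ℝ) ≤ 2 by norm_num)
      linarith
    rw [this]; norm_num
  have hconj : (starRingEnd ℂ) z = ((√2 / 2 : ℝ) : ℂ) * (1 + Complex.I) := by
    rw [hz, map_mul, Complex.conj_ofReal, map_sub, map_one, Complex.conj_I, sub_neg_eq_add]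
  have hzz : z * z = -Complex.I := by
    rw [hz]; linear_combination (1 - Complex.I) ^ 2 * h2 + (1 / 2) * Complex.I_sq
  have hzc : z * (starRingEnd ℂ) z = 1 := by
    rw [hconj, hz]; linear_combination (1 - Complex.I) * (1 + Complex.I) * h2 - (1 / 2) * Complex.I_sq
  have hcc : (starRingEnd ℂ) z * (starRingEnd ℂ) z = Complex.I := by
    rw [← map_mul, hzz]; simp
  have hcz : (starRingEnd ℂ) z * (starRingEnd ℂ) ((starRingEnd ℂ) z) = 1 := by
    rw [Complex.conj_conj, mul_comm, hzc]
  set a : Fin n → SS hL := fun i => ⟨ee ((1 / 2 : ℝ) • x i) z, ee_mem_SS hL ((hgood i).smul hL _) _⟩ with ha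
  set b : Fin n → SS hL := fun i => ⟨ee ((1 / 2 : ℝ) • x i) ((starRingEnd ℂ) z), ee_mem_SS hL ((hgood i).smul hL _) _⟩ with hb
  have haa : ∀ i, ((a i * a i : SS hL) : PowerSeries R) = (1 / 2 : ℝ) • (1 + s i) := by
    intro i
    change ee ((1 / 2 : ℝ) • x i) z * ee ((1 / 2 : ℝ) • x i) z = _
    rw [ee_sq _ _ hzc, hzz]
  have hbb : ∀ i, ((b i * b i : SS hL) : PowerSeries R) = (1 / 2 : ℝ) • (1 - s i) := by
    intro i
    change ee ((1 / 2 : ℝ) • x i) ((starRingEnd ℂ) z) * ee ((1 / 2 : ℝ) • x i) ((starRingEnd ℂ) z) = _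
    rw [ee_sq _ _ hcz, hcc]
    congr 1
    rw [sub_eq_add_neg]
    congr 1
    ext m
    simp [hs, ee, neg_div]
  have hab : ∀ i, a i * a i + b i * b i = 1 := by
    intro i
    apply Subtype.ext
    rw [Subalgebra.coe_add, haa, hbb, ← smul_add]
    have : (1 + s i + (1 - s i)) = (2:ℝ) • (1 : PowerSeries R) := by
      rw [Algebra.smul_def, map_ofNat]; ring
    rw [this, smul_smul]; norm_num
  set Q : MvPolynomial (Fin n) ℝ := aeval (fun i => C (1 / δ) * (2 * X i - 1)) p with hQ
  have hQpos : ∀ t : Fin n → ℝ, (∀ i, 0 ≤ t i ∧ t i ≤ 1) → 0 ≤ eval t Q := by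
    intro t _
    have : eval t Q = eval (fun i => 1 / δ * (2 * t i - 1)) p := by
      rw [← coe_aeval_eq_eval, ← coe_aeval_eq_eval, RingHom.coe_coe, RingHom.coe_coe, hQ, comp_aeval_apply]
      congr 2
      ext i
      simp
    rw [this]; exact hp _
  have h1 := bern_pos (LamS hL δ hδ) (fun q => Lam_sq_nonneg hL (SS_le_NN hL q.2) δ hδ) a b hab Q hQpos
  have e1 : ((aeval (fun i => a i * a i) Q : SS hL) : PowerSeries R) = aeval (fun i => (1 / δ) • s i) p := by
    have e0 : ((aeval (fun i => a i * a i) Q : SS hL) : PowerSeries R) =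
        (SS hL).val (aeval (fun i => a i * a i) Q) := rfl
    rw [e0, hQ, comp_aeval_apply, comp_aeval_apply]
    congr 2
    ext1 i
    have haa' : (SS hL).val (a i) * (SS hL).val (a i) = (1 / 2 : ℝ) • (1 + s i) := haa i
    simp only [map_mul, map_sub, map_ofNat, map_one, aeval_X, algHom_C, AlgHom.commutes]
    rw [haa', Algebra.smul_def, Algebra.smul_def]
    have e4 : (2 : PowerSeries R) * algebraMap ℝ (PowerSeries R) (1 / 2) = 1 := by
      rw [← map_ofNat (algebraMap ℝ (PowerSeries R)) 2, ← map_mul]; norm_num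
    linear_combination (algebraMap ℝ (PowerSeries R) (1 / δ)) * (1 + s i) * e4
  have e2 : Lam L δ (aeval (fun i => (1 / δ) • s i) p) = Lam L δ (aeval σ p) := by
    rw [aeval_def, aeval_def, eval₂_eq', eval₂_eq']
    have e3 : ∀ α : Fin n →₀ ℕ, ∏ i, ((1 / δ) • s i) ^ α i = (1 / δ) ^ (∑ i, α i) • ∏ i, s i ^ α i := by
      intro α
      simp only [Algebra.smul_def, mul_pow, Finset.prod_mul_distrib, Finset.prod_pow_eq_pow_sum, map_pow]
    simp only [← Algebra.smul_def, e3]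
    rw [Lam_sum hL _ _ (fun α _ => Submodule.smul_mem _ _ (Submodule.smul_mem _ _ (hsα α))) δ hδ,
      Lam_sum hL _ _ (fun α _ => Submodule.smul_mem _ _ (hσα α)) δ hδ]
    refine Finset.sum_congr rfl fun α _ => ?_
    rw [Lam_smul, Lam_smul, Lam_smul, hprod, Lam_shift hL _ (by rw [← hprod]; exact hsα α) δ hδ,
      ← mul_assoc ((1 / δ) ^ _), ← mul_pow, one_div_mul_cancel hδ.ne', one_pow, one_mul]
  rw [← e2, ← e1]
  exact h1

end abs
end SOSA

namespace SOSA
variable {n : ℕ}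

lemma sos_zero : IsSOS (0 : MvPolynomial (Fin n) ℝ) := ⟨0, fun _ => 0, by simp⟩

lemma sos_sq (q : MvPolynomial (Fin n) ℝ) : IsSOS (q ^ 2) := ⟨1, fun _ => q, by simp⟩

lemma sos_add {p q : MvPolynomial (Fin n) ℝ} (hp : IsSOS p) (hq : IsSOS q) : IsSOS (p + q) := by
  obtain ⟨k, a, rfl⟩ := hp
  obtain ⟨l, b, rfl⟩ := hq
  exact ⟨k + l, Fin.append a b, by rw [Fin.sum_univ_add]; simp⟩

lemma sos_smul {p : MvPolynomial (Fin n) ℝ} (hp : IsSOS p) {c : ℝ} (hc : 0 ≤ c) : IsSOS (C c * p) := by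
  obtain ⟨k, a, rfl⟩ := hp
  refine ⟨k, fun i => C (√c) * a i, ?_⟩
  rw [Finset.mul_sum]
  refine Finset.sum_congr rfl fun i _ => ?_
  rw [mul_pow, ← map_pow, Real.sq_sqrt hc]

lemma sos_sum {ι : Type*} (s : Finset ι) (F : ι → MvPolynomial (Fin n) ℝ) (h : ∀ i ∈ s, IsSOS (F i)) :
    IsSOS (∑ i ∈ s, F i) := by
  classical
  induction s using Finset.induction_on with
  | empty => simpa using sos_zero
  | insert i s hi ih =>
    rw [Finset.sum_insert hi]
    exact sos_add (h i (by simp)) (ih fun j hj => h j (Finset.mem_insert_of_mem hj))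

lemma sos_term (i : Fin n) (k : ℕ) :
    IsSOS (C ((1 : ℝ) / (Nat.factorial k : ℝ)) * X i ^ (2 * k) : MvPolynomial (Fin n) ℝ) := by
  rw [mul_comm 2 k, pow_mul]
  exact sos_smul (sos_sq _) (by positivity)

lemma theta_mono {r r' : ℕ} (h : r ≤ r') : IsSOS (theta n r' - theta n r) := by
  unfold theta
  rw [← Finset.sum_sdiff (Finset.range_mono (Nat.succ_le_succ h)), add_sub_cancel_right]
  exact sos_sum _ _ fun k _ => sos_sum _ _ fun i _ => sos_term i k

lemma theta_term (i : Fin n) (k : ℕ) :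
    IsSOS (C (k.factorial : ℝ) * theta n k - X i ^ (2 * k)) := by
  unfold theta
  have h1 : IsSOS ((∑ k ∈ Finset.range (k + 1), ∑ i : Fin n,
    C ((1 : ℝ) / (Nat.factorial k : ℝ)) * X i ^ (2 * k)) - C ((1 : ℝ) / (Nat.factorial k : ℝ)) * X i ^ (2 * k)) := by
    rw [Finset.sum_range_succ, ← Finset.add_sum_erase (Finset.univ) _ (Finset.mem_univ i),
      add_comm, add_assoc, add_sub_cancel_left]
    exact sos_add (sos_sum _ _ fun j _ => sos_term j k)
      (sos_sum _ _ fun k _ => sos_sum _ _ fun i _ => sos_term i k)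
  have h2 := sos_smul h1 (c := (k.factorial : ℝ)) (by positivity)
  rw [mul_sub, ← mul_assoc, ← map_mul, mul_one_div_cancel (by positivity), map_one, one_mul] at h2
  exact h2

/-- `q` is dominated by a multiple of some `theta` -/
def Dom (q : MvPolynomial (Fin n) ℝ) : Prop :=
  ∃ (s : ℝ) (r : ℕ), 0 ≤ s ∧ IsSOS (C s * theta n r - q)

lemma theta_sos (r : ℕ) : IsSOS (theta n r) :=
  sos_sum _ _ fun k _ => sos_sum _ _ fun i _ => sos_term i k

lemma sos_raise {q : MvPolynomial (Fin n) ℝ} {s : ℝ} {r r' : ℕ} (hs : 0 ≤ s) (h : r ≤ r')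
    (hq : IsSOS (q + C s * theta n r)) : IsSOS (q + C s * theta n r') := by
  have := sos_add hq (sos_smul (theta_mono (n := n) h) hs)
  convert this using 1; ring

lemma sos_raise' {q : MvPolynomial (Fin n) ℝ} {s s' : ℝ} {r : ℕ} (h : s ≤ s')
    (hq : IsSOS (q + C s * theta n r)) : IsSOS (q + C s' * theta n r) := by
  have := sos_add hq (sos_smul (theta_sos (n := n) r) (sub_nonneg.2 h))
  convert this using 1; rw [map_sub]; ring

lemma Dom.add {p q : MvPolynomial (Fin n) ℝ} (hp : Dom p) (hq : Dom q) : Dom (p + q) := by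
  obtain ⟨s, r, hs, h⟩ := hp
  obtain ⟨s', r', hs', h'⟩ := hq
  refine ⟨s + s', max r r', by positivity, ?_⟩
  rw [sub_eq_neg_add] at h h'
  have := sos_add (sos_raise hs (le_max_left r r') h) (sos_raise hs' (le_max_right r r') h')
  convert this using 1; rw [map_add]; ring

lemma Dom.smul {q : MvPolynomial (Fin n) ℝ} (hq : Dom q) {c : ℝ} (hc : 0 ≤ c) : Dom (C c * q) := by
  obtain ⟨s, r, hs, h⟩ := hq
  refine ⟨c * s, r, by positivity, ?_⟩
  have := sos_smul h hc
  convert this using 1; rw [map_mul]; ring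

lemma Dom.of_le {p q : MvPolynomial (Fin n) ℝ} (hq : Dom q) (h : IsSOS (q - p)) : Dom p := by
  obtain ⟨s, r, hs, h'⟩ := hq
  refine ⟨s, r, hs, ?_⟩
  have := sos_add h' h
  convert this using 1; ring

lemma dom_one (hn : 0 < n) : Dom (1 : MvPolynomial (Fin n) ℝ) := by
  have := theta_term (n := n) ⟨0, hn⟩ 0
  exact ⟨1, 0, zero_le_one, by simpa using this⟩

lemma dom_mon (hn : 0 < n) (S : Finset (Fin n)) : ∀ α : Fin n → ℕ,
    Dom (∏ i ∈ S, X i ^ (2 * α i) : MvPolynomial (Fin n) ℝ) := by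
  classical
  induction S using Finset.induction_on with
  | empty => intro α; simpa using dom_one hn
  | insert i S hi ih =>
    intro α
    have h1 := ih (fun j => 2 * α j)
    have h2 : Dom (X i ^ (2 * (2 * α i)) : MvPolynomial (Fin n) ℝ) :=
      ⟨_, _, by positivity, theta_term i (2 * α i)⟩
    refine ((h1.add h2).smul (c := 1 / 2) (by norm_num)).of_le ?_
    have h3 := sos_smul (sos_sq ((X i ^ (2 * α i) : MvPolynomial (Fin n) ℝ) - ∏ j ∈ S, X j ^ (2 * α j)))
      (c := 1 / 2) (by norm_num)
    convert h3 using 1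
    rw [Finset.prod_insert hi]
    have e : (∏ j ∈ S, X j ^ (2 * (2 * α j)) : MvPolynomial (Fin n) ℝ) = (∏ j ∈ S, X j ^ (2 * α j)) ^ 2 := by
      rw [← Finset.prod_pow]
      refine Finset.prod_congr rfl fun j _ => by ring
    rw [e]
    have e4 : (C (1 / 2 : ℝ) : MvPolynomial (Fin n) ℝ) * 2 = 1 := by
      rw [← map_ofNat (C : ℝ →+* MvPolynomial (Fin n) ℝ) 2, ← map_mul]; norm_num
    linear_combination (X i ^ (2 * α i) * ∏ j ∈ S, X j ^ (2 * α j)) * e4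

lemma dom_all (hn : 0 < n) (q : MvPolynomial (Fin n) ℝ) : Dom q := by
  induction q using MvPolynomial.induction_on' with
  | add p q hp hq => exact hp.add hq
  | monomial α c =>
    have h1 : Dom ((C (c ^ 2) : MvPolynomial (Fin n) ℝ)) := by
      simpa using (dom_one hn).smul (sq_nonneg c)
    refine ((h1.add (dom_mon hn Finset.univ α)).smul (c := 1 / 2) (by norm_num)).of_le ?_
    have h3 := sos_smul (sos_sq (C c - ∏ j, (X j ^ (α j) : MvPolynomial (Fin n) ℝ)))
      (c := 1 / 2) (by norm_num)
    convert h3 using 1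
    have e : (∏ j, X j ^ (2 * α j) : MvPolynomial (Fin n) ℝ) = (∏ j, X j ^ (α j)) ^ 2 := by
      rw [← Finset.prod_pow]
      refine Finset.prod_congr rfl fun j _ => by ring
    have em : monomial α c = C c * ∏ j, (X j ^ (α j) : MvPolynomial (Fin n) ℝ) := by
      rw [monomial_eq, Finsupp.prod_fintype]; simp
    rw [e, em, map_pow]
    have e4 : (C (1 / 2 : ℝ) : MvPolynomial (Fin n) ℝ) * 2 = 1 := by
      rw [← map_ofNat (C : ℝ →+* MvPolynomial (Fin n) ℝ) 2, ← map_mul]; norm_num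
    linear_combination (C c * ∏ j, X j ^ (α j)) * e4

/-- the cone used for the separation -/
def KK (p : MvPolynomial (Fin n) ℝ) (ε : ℝ) : PointedCone ℝ (MvPolynomial (Fin n) ℝ × ℝ) where
  carrier := {v | ∃ (t : ℝ) (r : ℕ), 0 ≤ t ∧ 0 ≤ v.2 + t * ε ∧
    IsSOS (v.1 + C t * p + C (v.2 + t * ε) * theta n r)}
  zero_mem' := ⟨0, 0, le_rfl, by simp, by simpa using sos_zero⟩
  add_mem' := by
    rintro ⟨u, a⟩ ⟨v, b⟩ ⟨t, r, ht, h0, h⟩ ⟨t', r', ht', h0', h'⟩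
    refine ⟨t + t', max r r', by positivity, ?_, ?_⟩
    · simp only [Prod.snd_add] at *; linarith
    have := sos_add (sos_raise h0 (le_max_left r r') h) (sos_raise h0' (le_max_right r r') h')
    convert this using 1
    simp only [Prod.snd_add, Prod.fst_add, map_add, map_mul]; ring
  smul_mem' := by
    rintro ⟨c, hc⟩ ⟨u, a⟩ ⟨t, r, ht, h0, h⟩
    have e : (⟨c, hc⟩ : {c : ℝ // 0 ≤ c}) • (u, a) = (C c * u, c * a) := by
      rw [← smul_eq_C_mul]; rfl
    rw [e]
    refine ⟨c * t, r, by positivity, ?_, ?_⟩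
    · have := mul_nonneg hc h0
      simp only at *; linarith
    · have := sos_smul h hc
      convert this using 1
      simp only [map_add, map_mul]; ring

theorem sos_of_nonneg (hn : 0 < n) (p : MvPolynomial (Fin n) ℝ) (hp : ∀ t, 0 ≤ eval t p)
    (ε : ℝ) (hε : 0 < ε) : ∃ r, IsSOS (p + C ε * theta n r) := by
  by_contra! hcon
  have hne : ((0 : MvPolynomial (Fin n) ℝ), (1:ℝ)) ≠ 0 := by simp
  obtain ⟨g, hg1, hg2⟩ := riesz_extension (KK p ε) (LinearPMap.mkSpanSingleton (K := ℝ) (0, (1:ℝ)) (1:ℝ) hne) (by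
      rintro ⟨x, hx⟩ hxK
      obtain ⟨b, rfl⟩ := Submodule.mem_span_singleton.1 hx
      have hval := LinearPMap.mkSpanSingleton'_apply (σ := RingHom.id ℝ) ((0 : MvPolynomial (Fin n) ℝ), (1:ℝ)) (1:ℝ)
        (fun c hc => by simp at hc; simp [hc]) b hx
      refine le_of_le_of_eq ?_ hval.symm
      obtain ⟨t, r, ht, h0, h⟩ := hxK
      clear hval
      simp only [Prod.smul_mk, smul_zero, smul_eq_mul, mul_one, zero_add, RingHom.id_apply] at *
      by_contra! hb
      have ht' : 0 < t := by
        rcases ht.eq_or_lt with rfl | h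
        · simp at h0; linarith
        · exact h
      have h1 := sos_raise' (show b + t * ε ≤ t * ε by linarith) h
      have h2 := sos_smul h1 (inv_nonneg.2 ht)
      refine hcon r ?_
      convert h2 using 1
      rw [mul_add, ← mul_assoc, ← mul_assoc, ← map_mul, ← map_mul, inv_mul_cancel₀ ht'.ne',
        inv_mul_cancel_left₀ ht'.ne', map_one, one_mul]) (by
      rintro ⟨q, b⟩
      obtain ⟨s, r, hs, h⟩ := dom_all hn (-q)
      refine ⟨⟨(|b| + s) • (0, 1), Submodule.smul_mem _ _ (Submodule.mem_span_singleton_self _)⟩, 0, r, le_rfl, ?_, ?_⟩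
      · have := neg_abs_le b
        simp; linarith
      · have := neg_abs_le b
        have h1 : IsSOS (q + C s * theta n r) := by convert h using 1; ring
        have h2 := sos_raise' (show s ≤ |b| + s + b by linarith) h1
        simpa using h2)
  have hg01 : g (0, 1) = 1 := by
    have := hg1 ⟨(0, 1), Submodule.mem_span_singleton_self _⟩
    rw [this]
    have := LinearPMap.mkSpanSingleton_apply ℝ ℝ (σ := RingHom.id ℝ) hne (1:ℝ)
    simpa using this
  set L : MvPolynomial (Fin n) ℝ →ₗ[ℝ] ℝ := g.comp (LinearMap.inl ℝ _ _) with hLdef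
  have hgL : ∀ q b, g (q, b) = L q + b := by
    intro q b
    have : (q, b) = (q, (0:ℝ)) + b • ((0 : MvPolynomial (Fin n) ℝ), (1:ℝ)) := by simp
    rw [this, map_add, map_smul, hg01]; simp [hLdef]
  have hL : ∀ q, 0 ≤ L (q * q) := by
    intro q
    have := hg2 (q * q, 0) ⟨0, 0, le_rfl, by simp, by simpa [sq] using sos_sq q⟩
    rw [hgL] at this; linarith
  have hx : ∀ (i : Fin n) (k : ℕ), L (X i ^ (2 * k)) ≤ (k.factorial : ℝ) := by
    intro i k
    have := hg2 (-X i ^ (2 * k), (k.factorial : ℝ)) ⟨0, k, le_rfl, by simp, by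
      have := theta_term i k
      rw [sub_eq_neg_add] at this
      simpa using this⟩
    rw [hgL, map_neg] at this; linarith
  have hLp := main_pos hL X hx p hp
  rw [aeval_X_left_apply] at hLp
  have := hg2 (-p, -ε) ⟨1, 0, zero_le_one, by simp, by simpa using sos_zero⟩
  rw [hgL, map_neg] at this
  linarith

end SOSA

namespace SOSA
variable {n : ℕ}

lemma eval_theta (x : Fin n → ℝ) (r : ℕ) :
    eval x (theta n r) = ∑ k ∈ Finset.range (r + 1), ∑ i : Fin n, 1 / (Nat.factorial k : ℝ) * x i ^ (2 * k) := by
  simp [theta]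

lemma theta_ge_term (x : Fin n → ℝ) (r k : ℕ) (hk : k ≤ r) (i : Fin n) :
    1 / (Nat.factorial k : ℝ) * x i ^ (2 * k) ≤ eval x (theta n r) := by
  rw [eval_theta]
  have hnn : ∀ (k : ℕ) (i : Fin n), 0 ≤ 1 / (Nat.factorial k : ℝ) * x i ^ (2 * k) := fun k i => by
    rw [pow_mul]; positivity
  refine le_trans ?_ (Finset.single_le_sum (f := fun k => ∑ i : Fin n, 1 / (Nat.factorial k : ℝ) * x i ^ (2 * k))
    (fun k _ => Finset.sum_nonneg fun i _ => hnn k i) (Finset.mem_range.2 (Nat.lt_succ_of_le hk)))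
  exact Finset.single_le_sum (f := fun i => 1 / (Nat.factorial k : ℝ) * x i ^ (2 * k)) (fun i _ => hnn k i) (Finset.mem_univ i)

lemma growth (f : MvPolynomial (Fin n) ℝ) : ∃ c : ℝ, 0 ≤ c ∧ ∀ x : Fin n → ℝ, 1 ≤ ‖x‖ →
    |eval x f| ≤ c * ‖x‖ ^ (f.totalDegree + 1) := by
  refine ⟨∑ α ∈ f.support, |coeff α f|, Finset.sum_nonneg fun _ _ => abs_nonneg _, fun x hx => ?_⟩
  rw [eval_eq', Finset.sum_mul]
  refine (Finset.abs_sum_le_sum_abs _ _).trans (Finset.sum_le_sum fun α hα => ?_)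
  rw [abs_mul, Finset.abs_prod]
  refine mul_le_mul_of_nonneg_left ?_ (abs_nonneg _)
  calc ∏ i, |x i ^ α i| ≤ ∏ i, ‖x‖ ^ α i := by
        refine Finset.prod_le_prod (fun _ _ => abs_nonneg _) fun i _ => ?_
        rw [abs_pow]
        exact pow_le_pow_left₀ (abs_nonneg _) (norm_le_pi_norm x i) _
    _ = ‖x‖ ^ (∑ i, α i) := Finset.prod_pow_eq_pow_sum _ _ _
    _ ≤ _ := by
        refine pow_le_pow_right₀ hx ?_
        have := le_totalDegree hα
        rw [Finsupp.sum_fintype _ _ (fun _ => rfl)] at this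
        omega

lemma exists_nonneg (hn : 0 < n) (f G : MvPolynomial (Fin n) ℝ) (hG : ∀ x, 0 ≤ eval x G)
    (hf : ∀ x, eval x G = 0 → 0 ≤ eval x f) (ε : ℝ) (hε : 0 < ε) :
    ∃ (r : ℕ) (lam : ℝ), 0 ≤ lam ∧ ∀ x, 0 ≤ eval x (f + C ε * theta n r + C lam * G) := by
  haveI : Nonempty (Fin n) := ⟨⟨0, hn⟩⟩
  obtain ⟨c, hc, hgr⟩ := growth f
  set D := f.totalDegree + 1 with hD
  set h : (Fin n → ℝ) → ℝ := fun x => eval x f + ε * eval x (theta n D) with hh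
  have hcont : Continuous h := by
    have h1 := MvPolynomial.continuous_eval f
    have h2 := MvPolynomial.continuous_eval (theta n D)
    exact h1.add (h2.const_mul ε)
  have hGc : Continuous fun x => eval x G := MvPolynomial.continuous_eval G
  set ρ : ℝ := max 1 (c * D.factorial / ε) with hρ
  have hout : ∀ x : Fin n → ℝ, ρ ≤ ‖x‖ → 0 ≤ h x := by
    intro x hx
    have hx1 : 1 ≤ ‖x‖ := (le_max_left _ _).trans hx
    have hx2 : c * D.factorial / ε ≤ ‖x‖ := (le_max_right _ _).trans hx
    obtain ⟨i, hi⟩ : ∃ i, ‖x i‖ = ‖x‖ := by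
      obtain ⟨i, hi⟩ := Finite.exists_max fun i => ‖x i‖
      exact ⟨i, le_antisymm (norm_le_pi_norm x i) ((pi_norm_le_iff_of_nonneg (norm_nonneg _)).2 hi)⟩
    have h1 := theta_ge_term x D D le_rfl i
    have h2 : x i ^ (2 * D) = ‖x‖ ^ D * ‖x‖ ^ D := by
      rw [pow_mul, ← sq_abs, ← Real.norm_eq_abs, hi, ← pow_mul, two_mul, pow_add]
    have h3 : ‖x‖ ≤ ‖x‖ ^ D := le_self_pow₀ hx1 (by omega)
    have h4 : c ≤ ε * (1 / (D.factorial : ℝ) * ‖x‖ ^ D) := by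
      have hfac : (0:ℝ) < D.factorial := by positivity
      have h5 := hx2.trans h3
      rw [div_le_iff₀ hε] at h5
      rw [one_div_mul_eq_div, ← mul_div_assoc, le_div_iff₀ hfac]
      linarith
    have h6 := (abs_le.1 (hgr x hx1)).1
    have h7 : c * ‖x‖ ^ D ≤ ε * eval x (theta n D) := by
      calc c * ‖x‖ ^ D ≤ ε * (1 / (D.factorial : ℝ) * ‖x‖ ^ D) * ‖x‖ ^ D := by gcongr
        _ = ε * (1 / (D.factorial : ℝ) * x i ^ (2 * D)) := by rw [h2]; ring
        _ ≤ _ := by gcongr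
    rw [hh]; simp only
    linarith
  set S : Set (Fin n → ℝ) := Metric.closedBall 0 ρ ∩ {x | h x ≤ 0} with hS
  have hSc : IsCompact S := (isCompact_closedBall 0 ρ).inter_right (isClosed_le hcont continuous_const)
  have hpos : ∀ x, eval x G = 0 → 0 < h x := by
    intro x hx
    have h1 := hf x hx
    have h2 := theta_ge_term x D 0 (Nat.zero_le _) ⟨0, hn⟩
    have h3 : 0 < eval x (theta n D) := lt_of_lt_of_le (by simp) h2
    have := mul_pos hε h3
    rw [hh]; simp only; linarith
  have key : ∃ lam : ℝ, 0 ≤ lam ∧ ∀ x ∈ S, 0 ≤ h x + lam * eval x G := by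
    rcases S.eq_empty_or_nonempty with he | hne
    · exact ⟨0, le_rfl, by simp [he]⟩
    · obtain ⟨x1, hx1, hm1⟩ := hSc.exists_isMinOn hne hGc.continuousOn
      obtain ⟨x2, hx2, hm2⟩ := hSc.exists_isMinOn hne hcont.continuousOn
      have hG1 : 0 < eval x1 G := by
        refine lt_of_le_of_ne (hG x1) fun h0 => ?_
        have := hpos x1 h0.symm
        exact absurd hx1.2 (not_le.2 this)
      have hh2 : h x2 ≤ 0 := hx2.2
      refine ⟨-h x2 / eval x1 G, div_nonneg (by linarith) hG1.le, fun x hx => ?_⟩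
      have a1 : eval x1 G ≤ eval x G := hm1 hx
      have a2 : h x2 ≤ h x := hm2 hx
      have a3 : -h x2 ≤ -h x2 / eval x1 G * eval x G := by
        rw [div_mul_eq_mul_div, le_div_iff₀ hG1]
        exact mul_le_mul_of_nonneg_left a1 (by linarith)
      linarith
  obtain ⟨lam, hl, hk⟩ := key
  refine ⟨D, lam, hl, fun x => ?_⟩
  have e : eval x (f + C ε * theta n D + C lam * G) = h x + lam * eval x G := by simp [hh]
  rw [e]
  by_cases hx : x ∈ S
  · exact hk x hx
  · have : 0 ≤ h x := by
      rcases le_or_gt ρ ‖x‖ with h1 | h1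
      · exact hout x h1
      · by_contra! h2
        exact hx ⟨by simpa using h1.le, h2.le⟩
    have := mul_nonneg hl (hG x)
    linarith

lemma exists_r (f G : MvPolynomial (Fin n) ℝ) (hG : ∀ x, 0 ≤ eval x G)
    (hf : ∀ x, eval x G = 0 → 0 ≤ eval x f) (ε : ℝ) (hε : 0 < ε) :
    ∃ (r : ℕ) (lam : ℝ), 0 ≤ lam ∧ IsSOS (f + C ε * theta n r + C lam * G) := by
  rcases Nat.eq_zero_or_pos n with rfl | hn
  · have hconst : ∀ q : MvPolynomial (Fin 0) ℝ, 0 ≤ eval 0 q → IsSOS q := by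
      intro q hq
      have e : q = C (eval 0 q) := by
        have h := eq_C_of_isEmpty q
        conv_rhs => rw [h]
        simpa using h
      rw [e]
      simpa using sos_smul (sos_sq (1 : MvPolynomial (Fin 0) ℝ)) hq
    by_cases h0 : eval 0 G = 0
    · exact ⟨0, 0, le_rfl, hconst _ (by simpa [theta] using hf 0 h0)⟩
    · have hp : 0 < eval 0 G := lt_of_le_of_ne (hG 0) (Ne.symm h0)
      refine ⟨0, |eval 0 f| / eval 0 G, by positivity, hconst _ ?_⟩
      simp only [map_add, map_mul, eval_C, theta, Finset.univ_eq_empty, Finset.sum_empty,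
        Finset.sum_const_zero, map_zero, mul_zero, add_zero]
      rw [div_mul_cancel₀ _ h0]
      have := neg_abs_le (eval 0 f)
      linarith
  · obtain ⟨R, lam, hl, hpos⟩ := exists_nonneg hn f G hG hf (ε / 2) (by positivity)
    obtain ⟨r, hr⟩ := sos_of_nonneg hn _ hpos (ε / 2) (by positivity)
    refine ⟨max r R, lam, hl, ?_⟩
    have h1 := sos_raise (by positivity) (le_max_left r R) hr
    have h2 := sos_add h1 (sos_smul (theta_mono (n := n) (le_max_right r R)) (c := ε / 2) (by positivity))
    convert h2 using 1
    have e : (C ε : MvPolynomial (Fin n) ℝ) = C (ε / 2) + C (ε / 2) := by rw [← map_add, add_halves]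
    rw [e]; ring

end SOSA

theorem sos_approx_on_algebraic_set_single_scalar (n m : ℕ)
    (g : Fin m → MvPolynomial (Fin n) ℝ) (f : MvPolynomial (Fin n) ℝ)
    (hf : ∀ x : Fin n → ℝ, (∀ j, eval x (g j) = 0) → 0 ≤ eval x f) :
    ∀ ε : ℝ, 0 < ε →
      ∃ (r₀ : ℕ) (lam : ℝ), 0 ≤ lam ∧
        ∀ r : ℕ, r₀ ≤ r →
          IsSOS (f + C ε * theta n r + C lam * ∑ j, g j ^ 2) := by
  intro ε hε
  have hG : ∀ x : Fin n → ℝ, eval x (∑ j, g j ^ 2) = ∑ j, (eval x (g j)) ^ 2 := fun x => by simp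
  obtain ⟨r₀, lam, hl, h⟩ := SOSA.exists_r f (∑ j, g j ^ 2)
    (fun x => by rw [hG]; positivity)
    (fun x hx => hf x fun j => by
      rw [hG, Finset.sum_eq_zero_iff_of_nonneg (fun _ _ => sq_nonneg _)] at hx
      exact pow_eq_zero_iff (two_ne_zero) |>.1 (hx j (Finset.mem_univ j))) ε hε
  refine ⟨r₀, lam, hl, fun r hr => ?_⟩
  have h' : IsSOS ((f + C lam * ∑ j, g j ^ 2) + C ε * theta n r₀) := by
    convert h using 1; ring
  have := SOSA.sos_raise hε.le hr h'
  convert this using 1; ring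
end
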